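/- Assume p = 2 (so q = 2 and |·| = |·|_* is the Euclidean norm on ℝ^d) and that μ is a martingale measure. Define, for δ > 0, V_Mart(δ) = sup { E_π[f(Y)] − L_δ(E_π[c_N(X, Y)]^{1/2}) : π a bicausal coupling with first marginal μ whose second marginal is a martingale measure and E_π[c_N(X, Y)] < ∞ }, and V_Mart(0) = E_μ[f(X)]. Then lim_{δ→0+} (V_Mart(δ) − V_Mart(0))/δ = L*( ( Σ_{n=1}^N E_μ[ |E_μ[𝔻_n f(X) | F_n] − E_μ[𝔻_n f(X) | F_{n−1}]|^2 ] )^{1/2} ), i.e. the sensitivity equals L*(‖ᵒ𝔻f − ᵖ𝔻f‖_{L^2(μ)}), where (ᵖ𝔻f)_n = E_μ[𝔻_n f(X) | F_{n−1}] is the predictable projection. -/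

import Mathlib

open MeasureTheory Filter Set
open scoped ENNReal

noncomputable section

/-- Discrete path space `X = (ℝ^d)^N`. -/
abbrev PathD (N d : ℕ) : Type := Fin N → Fin d → ℝ

/-- The `ℓ_e` norm on `ℝ^d`. -/
def lpnorm {d : ℕ} (e : ℝ) (v : Fin d → ℝ) : ℝ := (∑ i, |v i| ^ e) ^ (1 / e)

/-- Coordinate `x_n` of a path, with the convention `x_0 = 0` (and `x_n = 0` for `n > N`). -/
def coord {N d : ℕ} (x : PathD N d) (n : ℕ) : Fin d → ℝ :=
  if h : 1 ≤ n ∧ n ≤ N then x ⟨n - 1, by omega⟩ else 0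

/-- The cost `c_N(x,y) = Σ_{n=1}^N |Δx_n − Δy_n|^p` (with `|·|` the `ℓ_p` norm). -/
def cN {N d : ℕ} (p : ℝ) (x y : PathD N d) : ℝ :=
  ∑ n ∈ Finset.Icc 1 N,
    lpnorm p ((coord x n - coord x (n - 1)) - (coord y n - coord y (n - 1))) ^ p

/-- The σ-algebra `F_n = σ(x_1, …, x_n)` on the discrete path space. -/
def Fn (N d n : ℕ) : MeasurableSpace (PathD N d) :=
  MeasurableSpace.comap (fun x (i : Fin N) => if (i : ℕ) + 1 ≤ n then x i else 0) inferInstance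

/-- Conditional independence of `m₁` and `m₂` given `m'` under `π`, expressed through
conditional expectations of indicators. -/
def CondIndepOn {Ω : Type*} [MeasurableSpace Ω] (π : Measure Ω)
    (m' m₁ m₂ : MeasurableSpace Ω) : Prop :=
  ∀ A B : Set Ω, MeasurableSet[m₁] A → MeasurableSet[m₂] B →
    (π[(A ∩ B).indicator (fun _ => (1 : ℝ)) | m']) =ᵐ[π]
      (π[A.indicator (fun _ => (1 : ℝ)) | m']) * (π[B.indicator (fun _ => (1 : ℝ)) | m'])

/-- `π` is a coupling with first marginal `μ` which is causal to its second marginal: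
for every `n`, `σ(Y_1,…,Y_n)` is conditionally independent of `σ(X_1,…,X_N)` given `F_n`. -/
def IsCausalStar {N d : ℕ} (μ : Measure (PathD N d))
    (π : Measure (PathD N d × PathD N d)) : Prop :=
  π.map Prod.fst = μ ∧
  ∀ n : ℕ, CondIndepOn π ((Fn N d n).comap Prod.fst)
    ((Fn N d n).comap Prod.snd) ((Fn N d N).comap Prod.fst)

/-- `π` is a causal coupling of `(μ, ν)`. -/
def IsCausalCoupling {N d : ℕ} (μ ν : Measure (PathD N d))
    (π : Measure (PathD N d × PathD N d)) : Prop :=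
  π.map Prod.snd = ν ∧ IsCausalStar μ π

/-- `π` is a bicausal coupling of `(μ, ν)`: both `π` and its swap are causal. -/
def IsBicausalCoupling {N d : ℕ} (μ ν : Measure (PathD N d))
    (π : Measure (PathD N d × PathD N d)) : Prop :=
  IsCausalCoupling μ ν π ∧
  (∀ n : ℕ, CondIndepOn π ((Fn N d n).comap Prod.snd)
    ((Fn N d n).comap Prod.fst) ((Fn N d N).comap Prod.snd))

/-- `μ` is a martingale measure on the discrete path space: every coordinate is integrable
and `E_μ[X_n | F_{n−1}] = X_{n−1}` a.s. (with `X_0 = 0`). -/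
def IsMartingaleMeasure {N d : ℕ} (μ : Measure (PathD N d)) : Prop :=
  ∀ n : ℕ, 1 ≤ n → n ≤ N →
    Integrable (fun x => coord x n) μ ∧
    (μ[(fun x => coord x n) | Fn N d (n - 1)]) =ᵐ[μ] (fun x => coord x (n - 1))


/-- The discrete pathwise Malliavin derivative `𝔻_n f = Σ_{k=n}^N ∂_k f`, where `∂_k f` is the
`ℝ^d`-valued partial gradient of `f` in the `k`-th coordinate block (`k = 1, …, N`). -/
def Dn {N d : ℕ} (f : PathD N d → ℝ) (n : ℕ) (x : PathD N d) : Fin d → ℝ :=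
  fun j => ∑ k : Fin N, if n ≤ (k : ℕ) + 1 then
    fderiv ℝ f x (Pi.single k (Pi.single j 1)) else 0

/-- Standing assumptions on the penalty function `L : [0,∞) → [0,∞]`:
continuous, non-decreasing, `L(0) = 0` and `liminf_{u→∞} L(u)/u^p = +∞`. -/
structure PenaltyAssumptions (p : ℝ) (L : ℝ → ℝ≥0∞) : Prop where
  cont : ContinuousOn L (Set.Ici 0)
  mono : MonotoneOn L (Set.Ici 0)
  zero : L 0 = 0
  growth : Tendsto (fun u : ℝ => L u / ENNReal.ofReal (u ^ p)) atTop (nhds ⊤)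

/-- The convex conjugate `L*(v) = sup_{u ≥ 0} { u v − L(u) }`, valued in the extended reals. -/
def Lconj (L : ℝ → ℝ≥0∞) (v : ℝ) : EReal :=
  ⨆ u : {u : ℝ // 0 ≤ u}, ((u.1 * v : ℝ) : EReal) - ((L u.1 : ℝ≥0∞) : EReal)

/-- The expected transport cost `E_π[c_N(X,Y)]` of a coupling. -/
def costD {N d : ℕ} (p : ℝ) (π : Measure (PathD N d × PathD N d)) : ℝ :=
  ∫ z, cN p z.1 z.2 ∂π

/-- The penalised causal DRO value
`V(δ) = sup_{π ∈ Π_c(μ,*), E_π[c_N] < ∞} { E_π[f(Y)] − δ L(E_π[c_N(X,Y)]^{1/p}/δ) }`,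
valued in the extended reals. -/
def VD {N d : ℕ} (p : ℝ) (L : ℝ → ℝ≥0∞) (μ : Measure (PathD N d))
    (f : PathD N d → ℝ) (δ : ℝ) : EReal :=
  ⨆ π : {π : Measure (PathD N d × PathD N d) //
      IsProbabilityMeasure π ∧ IsCausalStar μ π ∧
      Integrable (fun z => cN p z.1 z.2) π},
    ((∫ z, f z.2 ∂π.1 : ℝ) : EReal) -
      ((ENNReal.ofReal δ * L ((costD p π.1) ^ (1 / p) / δ) : ℝ≥0∞) : EReal)

/-- The `L^q(μ)`-norm `(Σ_{n=1}^N E_μ[|E_μ[𝔻_n f(X)|F_n]|_*^q])^{1/q}` of the optional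
projection of the discrete pathwise Malliavin derivative. -/
def optionalNorm {N d : ℕ} (q : ℝ) (μ : Measure (PathD N d)) (f : PathD N d → ℝ) : ℝ :=
  (∑ n ∈ Finset.Icc 1 N, ∫ x, lpnorm q ((μ[Dn f n | Fn N d n]) x) ^ q ∂μ) ^ (1 / q)

/-- The map `v(e) = (e_1|e_1|^{q−2}, …, e_d|e_d|^{q−2})` on `ℝ^d`. -/
def vmap {d : ℕ} (q : ℝ) (e : Fin d → ℝ) : Fin d → ℝ :=
  fun i => e i * |e i| ^ (q - 2)

/-- The inverse `Δ^{-1}` of the increment map: `(Δ^{-1} y)_n = Σ_{k=1}^n y_k`. -/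
def DeltaInv {N d : ℕ} (y : PathD N d) : PathD N d :=
  fun i => ∑ k : Fin N, if (k : ℕ) ≤ (i : ℕ) then y k else 0

/-- A process `h = (h_n)_{n=1}^N` is predictable if `h_n` is `F_{n−1}`-measurable. -/
def IsPredictable {N d : ℕ} (h : ℕ → PathD N d → Fin d → ℝ) : Prop :=
  ∀ n : ℕ, 1 ≤ n → n ≤ N → Measurable[Fn N d (n - 1)] (h n)

end

open MeasureTheory Filter

noncomputable section

/-- The penalised bicausal DRO value under the martingale constraint:
`V_Mart(δ) = sup { E_π[f(Y)] − δ L(E_π[c_N]^{1/p}/δ) }`, the supremum being over bicausal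
couplings `π` with first marginal `μ`, second marginal a martingale measure, and finite cost. -/
def VMartD {N d : ℕ} (p : ℝ) (L : ℝ → ℝ≥0∞) (μ : Measure (PathD N d))
    (f : PathD N d → ℝ) (δ : ℝ) : EReal :=
  ⨆ π : {π : Measure (PathD N d × PathD N d) //
      IsProbabilityMeasure π ∧ IsBicausalCoupling μ (π.map Prod.snd) π ∧
      IsMartingaleMeasure (π.map Prod.snd) ∧
      Integrable (fun z => cN p z.1 z.2) π},
    ((∫ z, f z.2 ∂π.1 : ℝ) : EReal) -
      ((ENNReal.ofReal δ * L ((costD p π.1) ^ (1 / p) / δ) : ℝ≥0∞) : EReal)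

section CondExp

variable {Ω : Type*} {m m' m₁ m₂ mΩ : MeasurableSpace Ω} {π : Measure Ω}

/-- Self-adjointness of the conditional expectation against measurable factors. -/
theorem integral_condExp_mul_of_stronglyMeasurable [IsProbabilityMeasure π] (hm : m ≤ mΩ)
    {φ W : Ω → ℝ} (hW : StronglyMeasurable[m] W) (hφ : Integrable φ π)
    (hφW : Integrable (φ * W) π) :
    ∫ ω, (π[φ | m]) ω * W ω ∂π = ∫ ω, φ ω * W ω ∂π := by
  have h := condExp_mul_of_stronglyMeasurable_right hW hφW hφ
  calc ∫ ω, (π[φ | m]) ω * W ω ∂π = ∫ ω, (π[φ * W | m]) ω ∂π :=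
        integral_congr_ae (h.symm.mono fun ω hω => hω)
    _ = ∫ ω, φ ω * W ω ∂π := integral_condExp hm

theorem norm_condExp_indicator_one_le (B : Set Ω) :
    ∀ᵐ ω ∂π, ‖(π[B.indicator (fun _ => (1 : ℝ)) | m]) ω‖ ≤ 1 := by
  refine ae_bdd_norm_condExp_of_ae_bdd_norm (R := 1) (ae_of_all _ fun ω => ?_)
  by_cases h : ω ∈ B <;> simp [h]

theorem CondIndepOn.condExp_indicator_eq [IsProbabilityMeasure π]
    (hci : CondIndepOn π m' m₁ m₂) (hm' : m' ≤ m₂) (hm₁ : m₁ ≤ mΩ) (hm₂ : m₂ ≤ mΩ)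
    {B : Set Ω} (hB : MeasurableSet[m₁] B) :
    π[B.indicator (fun _ => (1 : ℝ)) | m'] =ᵐ[π] π[B.indicator (fun _ => (1 : ℝ)) | m₂] := by
  have hB' := hm₁ B hB
  have hint : ∀ S : Set Ω, MeasurableSet[mΩ] S → Integrable (S.indicator (fun _ => (1 : ℝ))) π :=
    fun S hS => (integrable_const 1).indicator hS
  refine ae_eq_condExp_of_forall_setIntegral_eq hm₂ (hint B hB')
    (fun s _ _ => integrable_condExp.integrableOn) (fun A hA _ => ?_)
    (stronglyMeasurable_condExp.mono hm').aestronglyMeasurable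
  have hA' := hm₂ A hA
  rw [← integral_indicator hA', ← integral_indicator hA']
  have key : ∫ ω, (π[A.indicator (fun _ => (1 : ℝ)) | m']) ω *
      (π[B.indicator (fun _ => (1 : ℝ)) | m']) ω ∂π =
      ∫ ω, A.indicator (fun _ => (1 : ℝ)) ω * (π[B.indicator (fun _ => (1 : ℝ)) | m']) ω ∂π := by
    refine integral_condExp_mul_of_stronglyMeasurable (hm'.trans hm₂) stronglyMeasurable_condExp
      (hint A hA') ?_
    refine Integrable.mono' (integrable_condExp (m := m')
      (f := B.indicator (fun _ => (1 : ℝ)))).norm ((hint A hA').1.mul integrable_condExp.1) (ae_of_all _ fun ω => ?_)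
    by_cases h : ω ∈ A <;> simp [h]
  calc ∫ ω, A.indicator (π[B.indicator (fun _ => (1 : ℝ)) | m']) ω ∂π
      = ∫ ω, A.indicator (fun _ => (1 : ℝ)) ω *
          (π[B.indicator (fun _ => (1 : ℝ)) | m']) ω ∂π := by
        congr 1; ext ω; by_cases h : ω ∈ A <;> simp [h]
    _ = ∫ ω, (π[(B ∩ A).indicator (fun _ => (1 : ℝ)) | m']) ω ∂π := by
        rw [← key]
        refine integral_congr_ae ((hci B A hB hA).mono fun ω hω => ?_)
        rw [hω, Pi.mul_apply, mul_comm]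
    _ = ∫ ω, (B ∩ A).indicator (fun _ => (1 : ℝ)) ω ∂π := integral_condExp (hm'.trans hm₂)
    _ = _ := by rw [Set.inter_comm, Set.indicator_indicator]

/-- If `m₁` and `m₂` are conditionally independent given `m' ≤ m₂`, then an `m₂`-measurable
function may be replaced by its conditional expectation given `m'` when integrated against
`m₁`-measurable functions. -/
theorem CondIndepOn.integral_mul_eq [IsProbabilityMeasure π]
    (hci : CondIndepOn π m' m₁ m₂) (hm' : m' ≤ m₂) (hm₁ : m₁ ≤ mΩ) (hm₂ : m₂ ≤ mΩ)
    {φ W : Ω → ℝ} (hφm : StronglyMeasurable[m₂] φ) (hWm : StronglyMeasurable[m₁] W)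
    (hφ : Integrable φ π) (hφW : Integrable (φ * W) π) (hφW' : Integrable (π[φ | m'] * W) π) :
    ∫ ω, φ ω * W ω ∂π = ∫ ω, (π[φ | m']) ω * W ω ∂π := by
  have hmm := hm'.trans hm₂
  have hset : π[π[φ | m'] | m₁] =ᵐ[π] π[φ | m₁] := by
    refine (ae_eq_condExp_of_forall_setIntegral_eq hm₁ integrable_condExp
      (fun s _ _ => integrable_condExp.integrableOn) (fun B hB _ => ?_)
      stronglyMeasurable_condExp.aestronglyMeasurable).symm
    have hB' := hm₁ B hB
    have hint : Integrable (B.indicator (fun _ => (1 : ℝ))) π :=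
      (integrable_const 1).indicator hB'
    have hbdd : ∀ {ψ : Ω → ℝ}, Integrable ψ π →
        Integrable (B.indicator (fun _ => (1 : ℝ)) * ψ) π := fun hψ =>
      Integrable.mono' hψ.norm (hint.1.mul hψ.1)
        (ae_of_all _ fun ω => by by_cases h : ω ∈ B <;> simp [h])
    have hone : ∀ ψ : Ω → ℝ, ∫ ω in B, ψ ω ∂π =
        ∫ ω, B.indicator (fun _ => (1 : ℝ)) ω * ψ ω ∂π := fun ψ => by
      rw [← integral_indicator hB']
      congr 1; ext ω; by_cases h : ω ∈ B <;> simp [h]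
    have hb : ∀ {ψ : Ω → ℝ} (m : MeasurableSpace Ω), Integrable ψ π →
        Integrable (ψ * π[B.indicator (fun _ => (1 : ℝ)) | m]) π := fun m hψ =>
      hψ.mul_bdd (c := 1) integrable_condExp.1 (norm_condExp_indicator_one_le B)
    rw [setIntegral_condExp hm₁ hφ hB, hone, hone]
    calc ∫ ω, B.indicator (fun _ => (1 : ℝ)) ω * φ ω ∂π
        = ∫ ω, (π[B.indicator (fun _ => (1 : ℝ)) | m₂]) ω * φ ω ∂π :=
          (integral_condExp_mul_of_stronglyMeasurable hm₂ hφm hint (hbdd hφ)).symm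
      _ = ∫ ω, φ ω * (π[B.indicator (fun _ => (1 : ℝ)) | m']) ω ∂π :=
          integral_congr_ae ((hci.condExp_indicator_eq hm' hm₁ hm₂ hB).mono fun ω hω => by
            simp only [hω, mul_comm])
      _ = ∫ ω, (π[φ | m']) ω * (π[B.indicator (fun _ => (1 : ℝ)) | m']) ω ∂π :=
          (integral_condExp_mul_of_stronglyMeasurable hmm stronglyMeasurable_condExp hφ
            (hb m' hφ)).symm
      _ = ∫ ω, (π[B.indicator (fun _ => (1 : ℝ)) | m']) ω * (π[φ | m']) ω ∂π := by
          simp only [mul_comm]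
      _ = ∫ ω, B.indicator (fun _ => (1 : ℝ)) ω * (π[φ | m']) ω ∂π :=
          integral_condExp_mul_of_stronglyMeasurable hmm stronglyMeasurable_condExp hint
            (hbdd integrable_condExp)
  rw [← integral_condExp_mul_of_stronglyMeasurable hm₁ hWm hφ hφW,
    ← integral_condExp_mul_of_stronglyMeasurable hm₁ hWm integrable_condExp hφW']
  exact integral_congr_ae (hset.mono fun ω hω => by simp only [hω])

/-- Conditional expectations commute with pulling back along a measurable map. -/
theorem condExp_comp_ae_eq [IsProbabilityMeasure π] {E F : Type*} {n mE : MeasurableSpace E}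
    [NormedAddCommGroup F] [NormedSpace ℝ F] [CompleteSpace F] {X : Ω → E} (hX : Measurable X)
    (hn : n ≤ mE) {φ : E → F} (hφ : Integrable φ (π.map X)) :
    π[φ ∘ X | n.comap X] =ᵐ[π] ((π.map X)[φ | n]) ∘ X := by
  have hc : n.comap X ≤ mΩ := (MeasurableSpace.comap_mono hn).trans hX.comap_le
  have : IsProbabilityMeasure (π.map X) := Measure.isProbabilityMeasure_map hX.aemeasurable
  refine (ae_eq_condExp_of_forall_setIntegral_eq hc (hφ.comp_measurable hX)
    (fun s _ _ => (integrable_condExp.comp_measurable hX).integrableOn) ?_ ?_).symm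
  · rintro _ ⟨B, hB, rfl⟩ _
    have h1 := setIntegral_map (μ := π) (hn B hB)
      (integrable_condExp (μ := π.map X) (f := φ) (m := n)).1 hX.aemeasurable
    have h2 := setIntegral_map (μ := π) (hn B hB) hφ.1 hX.aemeasurable
    simp only [Function.comp_apply]
    rw [← h1, ← h2, setIntegral_condExp hn hφ hB]
  · exact (stronglyMeasurable_condExp (m := n).comp_measurable
      (comap_measurable X)).aestronglyMeasurable

/-- If every `m₁`-measurable set is a.e. equal to an `m'`-measurable set, then `m₁` is
conditionally independent of anything given `m'`. -/
theorem condIndepOn_of_forall_ae_eq [IsProbabilityMeasure π] (hm' : m' ≤ mΩ)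
    (hm₂ : m₂ ≤ mΩ) (h : ∀ A, MeasurableSet[m₁] A → ∃ A', MeasurableSet[m'] A' ∧ A =ᵐ[π] A') :
    CondIndepOn π m' m₁ m₂ := by
  intro A B hA hB
  obtain ⟨A', hA', hAA'⟩ := h A hA
  have hB' := hm₂ B hB
  have hsm : StronglyMeasurable[m'] (A'.indicator (fun _ => (1 : ℝ))) :=
    StronglyMeasurable.indicator (@stronglyMeasurable_const _ _ m' _ 1) hA'
  have hint : Integrable (B.indicator (fun _ => (1 : ℝ))) π :=
    (integrable_const 1).indicator hB'
  have hintA : Integrable (A'.indicator (fun _ => (1 : ℝ))) π :=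
    (integrable_const 1).indicator (hm' A' hA')
  have e1 : A.indicator (fun _ => (1 : ℝ)) =ᵐ[π] A'.indicator (fun _ => (1 : ℝ)) :=
    indicator_ae_eq_of_ae_eq_set hAA'
  have e2 : (A ∩ B).indicator (fun _ => (1 : ℝ)) =ᵐ[π]
      A'.indicator (fun _ => (1 : ℝ)) * B.indicator (fun _ => (1 : ℝ)) := by
    filter_upwards [e1] with ω hω
    rw [Pi.mul_apply, ← hω]
    by_cases h1 : ω ∈ A <;> by_cases h2 : ω ∈ B <;> simp [h1, h2]
  have e3 : π[A.indicator (fun _ => (1 : ℝ)) | m'] =ᵐ[π] A'.indicator (fun _ => (1 : ℝ)) :=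
    (condExp_congr_ae e1).trans (by rw [condExp_of_stronglyMeasurable hm' hsm hintA])
  have hprod : Integrable
      (A'.indicator (fun _ => (1 : ℝ)) * B.indicator (fun _ => (1 : ℝ))) π :=
    Integrable.mono' hint.norm (hintA.1.mul hint.1)
      (ae_of_all _ fun ω => by by_cases h : ω ∈ A' <;> simp [h])
  exact ((condExp_congr_ae e2).trans
    (condExp_mul_of_stronglyMeasurable_left hsm hprod hint)).trans (e3.symm.mul (ae_eq_refl _))

end CondExp

section CauchySchwarz

variable {Ω ι : Type*} [Fintype ι] {mΩ : MeasurableSpace Ω} {π : Measure Ω}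

theorem MeasureTheory.MemLp.integrable_mul_two {a b : Ω → ℝ} (ha : MemLp a 2 π)
    (hb : MemLp b 2 π) : Integrable (fun ω => a ω * b ω) π := ha.integrable_mul hb

/-- Cauchy–Schwarz inequality for finite families of square-integrable functions. -/
theorem abs_integral_sum_mul_le {a b : ι → Ω → ℝ} (ha : ∀ k, MemLp (a k) 2 π)
    (hb : ∀ k, MemLp (b k) 2 π) :
    |∫ ω, ∑ k, a k ω * b k ω ∂π| ≤
      √(∫ ω, ∑ k, a k ω ^ 2 ∂π) * √(∫ ω, ∑ k, b k ω ^ 2 ∂π) := by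
  have hab : Integrable (fun ω => ∑ k, a k ω * b k ω) π :=
    integrable_finsetSum _ fun k _ => (ha k).integrable_mul_two (hb k)
  have haa : Integrable (fun ω => ∑ k, a k ω ^ 2) π :=
    integrable_finsetSum _ fun k _ => (ha k).integrable_sq
  have hbb : Integrable (fun ω => ∑ k, b k ω ^ 2) π :=
    integrable_finsetSum _ fun k _ => (hb k).integrable_sq
  have hdisc : discrim (∫ ω, ∑ k, a k ω ^ 2 ∂π) (2 * ∫ ω, ∑ k, a k ω * b k ω ∂π)
      (∫ ω, ∑ k, b k ω ^ 2 ∂π) ≤ 0 := by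
    refine discrim_le_zero fun t => ?_
    have : (∫ ω, ∑ k, a k ω ^ 2 ∂π) * (t * t) + (2 * ∫ ω, ∑ k, a k ω * b k ω ∂π) * t +
        ∫ ω, ∑ k, b k ω ^ 2 ∂π = ∫ ω, ∑ k, (t * a k ω + b k ω) ^ 2 ∂π := by
      have e : ∀ ω, ∑ k, (t * a k ω + b k ω) ^ 2 =
          t * t * (∑ k, a k ω ^ 2) + 2 * t * (∑ k, a k ω * b k ω) + ∑ k, b k ω ^ 2 := fun ω => by
        simp only [Finset.mul_sum, ← Finset.sum_add_distrib]
        exact Finset.sum_congr rfl fun k _ => by ring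
      simp only [e]
      rw [integral_add (f := fun ω => t * t * (∑ k, a k ω ^ 2) + 2 * t * (∑ k, a k ω * b k ω))
          ((haa.const_mul _).add (hab.const_mul _)) hbb,
        integral_add (haa.const_mul _) (hab.const_mul _), integral_const_mul, integral_const_mul]
      ring
    rw [this]
    exact integral_nonneg fun ω => Finset.sum_nonneg fun k _ => sq_nonneg _
  rw [← Real.sqrt_mul (integral_nonneg fun ω => Finset.sum_nonneg fun k _ => sq_nonneg _)]
  refine Real.abs_le_sqrt ?_
  rw [discrim] at hdisc
  linarith

end CauchySchwarz

section PathSpace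

variable {N d : ℕ}

/-- The path stopped after its first `n` coordinates (and set to zero afterwards). -/
def truncPath (n : ℕ) (x : PathD N d) : PathD N d := fun i => if (i : ℕ) + 1 ≤ n then x i else 0

theorem Fn_eq_comap (n : ℕ) :
    Fn N d n = MeasurableSpace.comap (truncPath n) inferInstance := rfl

theorem measurable_truncPath (n : ℕ) : Measurable (truncPath n : PathD N d → PathD N d) := by
  refine measurable_pi_lambda _ fun i => ?_
  by_cases h : (i : ℕ) + 1 ≤ n
  · simpa [truncPath, h] using measurable_pi_apply i
  · simp [truncPath, h]

theorem Fn_le (n : ℕ) : Fn N d n ≤ (inferInstance : MeasurableSpace (PathD N d)) :=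
  (measurable_truncPath n).comap_le

theorem truncPath_truncPath {m n : ℕ} (h : m ≤ n) (x : PathD N d) :
    truncPath m (truncPath n x) = truncPath m x := by
  ext i j
  simp only [truncPath]
  split_ifs with h1 h2
  · rfl
  · omega
  · rfl

theorem measurable_truncPath_Fn {m n : ℕ} (h : m ≤ n) :
    Measurable[Fn N d n] (truncPath m : PathD N d → PathD N d) := by
  have : (truncPath m : PathD N d → PathD N d) = truncPath m ∘ truncPath n :=
    funext fun x => (truncPath_truncPath h x).symm
  rw [this]
  exact (measurable_truncPath m).comp (comap_measurable _)

theorem Fn_mono {m n : ℕ} (h : m ≤ n) : Fn N d m ≤ Fn N d n :=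
  (measurable_truncPath_Fn h).comap_le

theorem Fn_self : Fn N d N = (inferInstance : MeasurableSpace (PathD N d)) := by
  have : (truncPath N : PathD N d → PathD N d) = id := by
    ext x i j
    simp [truncPath, Nat.succ_le_of_lt i.2]
  rw [Fn_eq_comap, this, MeasurableSpace.comap_id]

theorem coord_truncPath {m n : ℕ} (h : m ≤ n) (x : PathD N d) :
    coord (truncPath n x) m = coord x m := by
  unfold coord
  split_ifs with h1
  · have : m - 1 + 1 ≤ n := by omega
    simp [truncPath, this]
  · rfl

theorem coord_succ (x : PathD N d) (n : Fin N) : coord x (n + 1) = x n := by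
  have : (n : ℕ) + 1 ≤ N := n.2
  simp [coord, this]

theorem coord_zero (x : PathD N d) : coord x 0 = 0 := by simp [coord]

theorem measurable_coord (n : ℕ) : Measurable (fun x : PathD N d => coord x n) := by
  unfold coord
  split_ifs with h
  · exact measurable_pi_apply _
  · exact measurable_const

theorem measurable_coord_Fn {m n : ℕ} (h : m ≤ n) :
    Measurable[Fn N d n] (fun x : PathD N d => coord x m) := by
  have : (fun x : PathD N d => coord x m) = (fun x => coord x m) ∘ truncPath n :=
    funext fun x => (coord_truncPath h x).symm
  rw [this]
  exact (measurable_coord m).comp (comap_measurable _)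

/-- The `k.2`-th component of the increment of a path between times `k.1` and `k.1 + 1`. -/
def inc (k : Fin N × Fin d) (x : PathD N d) : ℝ := coord x (k.1 + 1) k.2 - coord x k.1 k.2

theorem measurable_inc_Fn (k : Fin N × Fin d) : Measurable[Fn N d (k.1 + 1)] (inc k) :=
  ((measurable_pi_apply k.2).comp (measurable_coord_Fn le_rfl)).sub
    ((measurable_pi_apply k.2).comp (measurable_coord_Fn (Nat.le_succ _)))

theorem measurable_inc (k : Fin N × Fin d) : Measurable (inc k) :=
  (measurable_inc_Fn k).mono (Fn_le _) le_rfl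

theorem inc_sub (k : Fin N × Fin d) (x y : PathD N d) : inc k (y - x) = inc k y - inc k x := by
  unfold inc coord
  split_ifs <;> simp only [Pi.sub_apply, Pi.zero_apply] <;> ring

theorem abs_coord_le (x : PathD N d) (n : ℕ) (j : Fin d) : |coord x n j| ≤ ‖x‖ := by
  unfold coord
  split_ifs with h
  · exact (norm_le_pi_norm (x _) j).trans (norm_le_pi_norm x _)
  · simp

theorem abs_inc_le (k : Fin N × Fin d) (x : PathD N d) : |inc k x| ≤ 2 * ‖x‖ := by
  have h1 := abs_coord_le x (k.1 + 1) k.2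
  have h2 := abs_coord_le x k.1 k.2
  rw [inc]
  linarith [abs_sub (coord x (k.1 + 1) k.2) (coord x k.1 k.2)]

theorem apply_eq_sum_inc (x : PathD N d) (i : Fin N) (j : Fin d) :
    x i j = ∑ n : Fin N, if (n : ℕ) ≤ i then inc (n, j) x else 0 := by
  have h : ∑ m ∈ Finset.range (i + 1), (coord x (m + 1) j - coord x m j) = x i j := by
    rw [Finset.sum_range_sub (fun m => coord x m j), coord_succ, coord_zero]
    simp
  rw [← h, ← Finset.sum_filter]
  refine (Finset.sum_bij (fun (n : Fin N) _ => (n : ℕ)) ?_ ?_ ?_ ?_).symm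
  · intro n hn
    simp only [Finset.mem_filter, Finset.mem_univ, true_and] at hn
    simp only [Finset.mem_range]; omega
  · intro a _ b _ hab
    exact Fin.ext hab
  · intro b hb
    simp only [Finset.mem_range] at hb
    exact ⟨⟨b, by omega⟩, by simp only [Finset.mem_filter, Finset.mem_univ, true_and]; omega, rfl⟩
  · intro n _
    rfl

theorem lpnorm_two_rpow_two (v : Fin d → ℝ) : lpnorm 2 v ^ (2 : ℝ) = ∑ j, v j ^ 2 := by
  have h : 0 ≤ ∑ i, |v i| ^ (2 : ℝ) :=
    Finset.sum_nonneg fun i _ => Real.rpow_nonneg (abs_nonneg _) _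
  rw [lpnorm, ← Real.rpow_mul h]
  norm_num

theorem abs_apply_le_lpnorm_two (v : Fin d → ℝ) (j : Fin d) : |v j| ≤ lpnorm 2 v := by
  have h0 : 0 ≤ lpnorm 2 v :=
    Real.rpow_nonneg (Finset.sum_nonneg fun i _ => Real.rpow_nonneg (abs_nonneg _) _) _
  refine abs_le_of_sq_le_sq ?_ h0
  have := lpnorm_two_rpow_two v
  rw [Real.rpow_two] at this
  rw [this]
  exact Finset.single_le_sum (f := fun i => v i ^ 2) (fun i _ => sq_nonneg _) (Finset.mem_univ j)

theorem sum_Icc_eq_sum_fin {M : Type*} [AddCommMonoid M] (F : ℕ → M) :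
    ∑ n ∈ Finset.Icc 1 N, F n = ∑ n : Fin N, F (n + 1) := by
  rw [Fin.sum_univ_eq_sum_range (fun n => F (n + 1)), Finset.range_eq_Ico,
    Finset.sum_Ico_add' F 0 N 1]
  rfl

theorem cN_two (x y : PathD N d) : cN 2 x y = ∑ k, (inc k y - inc k x) ^ 2 := by
  rw [cN, sum_Icc_eq_sum_fin, Fintype.sum_prod_type]
  refine Finset.sum_congr rfl fun n _ => ?_
  rw [lpnorm_two_rpow_two]
  refine Finset.sum_congr rfl fun j _ => ?_
  simp only [inc, Pi.sub_apply, Nat.add_sub_cancel]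
  ring

theorem norm_sq_le_sum_inc (x : PathD N d) : ‖x‖ ^ 2 ≤ N * ∑ k, inc k x ^ 2 := by
  have hS : 0 ≤ N * ∑ k : Fin N × Fin d, inc k x ^ 2 :=
    mul_nonneg (Nat.cast_nonneg _) (Finset.sum_nonneg fun k _ => sq_nonneg _)
  suffices ‖x‖ ≤ √(N * ∑ k, inc k x ^ 2) by
    calc ‖x‖ ^ 2 ≤ √(N * ∑ k, inc k x ^ 2) ^ 2 := by gcongr
      _ = _ := Real.sq_sqrt hS
  refine (pi_norm_le_iff_of_nonneg (Real.sqrt_nonneg _)).2 fun i =>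
    (pi_norm_le_iff_of_nonneg (Real.sqrt_nonneg _)).2 fun j => ?_
  rw [Real.norm_eq_abs]
  refine Real.abs_le_sqrt ?_
  rw [apply_eq_sum_inc x i j]
  refine (sq_sum_le_card_mul_sum_sq).trans ?_
  simp only [Finset.card_univ, Fintype.card_fin]
  refine mul_le_mul_of_nonneg_left ?_ (Nat.cast_nonneg _)
  rw [Fintype.sum_prod_type]
  refine Finset.sum_le_sum fun n _ => ?_
  refine le_trans ?_ (Finset.single_le_sum (f := fun j => inc (n, j) x ^ 2)
    (fun i _ => sq_nonneg _) (Finset.mem_univ j))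
  split_ifs
  · rfl
  · simpa using sq_nonneg _

/-- Summation by parts: the derivative of `f` in terms of increments. -/
theorem fderiv_apply_eq_sum_inc (f : PathD N d → ℝ) (x h : PathD N d) :
    fderiv ℝ f x h = ∑ k : Fin N × Fin d, Dn f (k.1 + 1) x k.2 * inc k h := by
  have e : h = ∑ i : Fin N, ∑ j : Fin d, h i j • Pi.single i (Pi.single j (1 : ℝ)) := by
    ext a b
    simp only [Finset.sum_apply, Pi.smul_apply, smul_eq_mul]
    rw [Finset.sum_eq_single a, Finset.sum_eq_single b]
    · simp
    · intro c _ hc; simp [hc.symm]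
    · simp
    · intro c _ hc; simp [hc.symm]
    · simp
  conv_lhs => rw [e]
  simp only [map_sum, map_smul, smul_eq_mul]
  rw [Fintype.sum_prod_type, Finset.sum_comm]
  conv_rhs => rw [Finset.sum_comm]
  refine Finset.sum_congr rfl fun j _ => ?_
  simp only [Dn, Finset.sum_mul, add_le_add_iff_right]
  rw [Finset.sum_comm]
  refine Finset.sum_congr rfl fun i _ => ?_
  rw [apply_eq_sum_inc h i j, Finset.sum_mul]
  refine Finset.sum_congr rfl fun n _ => ?_
  split_ifs <;> ring

theorem continuous_Dn {f : PathD N d → ℝ} (hf : ContDiff ℝ 1 f) (n : ℕ) (j : Fin d) :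
    Continuous fun x => Dn f n x j := by
  unfold Dn
  refine continuous_finsetSum _ fun k _ => ?_
  split_ifs
  · exact (hf.continuous_fderiv one_ne_zero).clm_apply continuous_const
  · exact continuous_const

theorem norm_fderiv_le {f : PathD N d → ℝ} {C : ℝ}
    (hgrow : ∀ n : ℕ, ∀ x : PathD N d, lpnorm 2 (Dn f n x) ≤ C * (1 + ‖x‖)) :
    ∃ K, 0 ≤ K ∧ ∀ x, ‖fderiv ℝ f x‖ ≤ K * (1 + ‖x‖) := by
  have hD : ∀ n x (j : Fin d), |Dn f n x j| ≤ |C| * (1 + ‖x‖) := fun n x j =>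
    ((abs_apply_le_lpnorm_two _ j).trans (hgrow n x)).trans
      (mul_le_mul_of_nonneg_right (le_abs_self C) (by positivity))
  refine ⟨(Fintype.card (Fin N × Fin d)) * (|C| * 2), by positivity, fun x => ?_⟩
  refine ContinuousLinearMap.opNorm_le_bound _ (by positivity) fun h => ?_
  rw [fderiv_apply_eq_sum_inc, Real.norm_eq_abs]
  calc |∑ k : Fin N × Fin d, Dn f (k.1 + 1) x k.2 * inc k h|
      ≤ ∑ k : Fin N × Fin d, |Dn f (k.1 + 1) x k.2 * inc k h| := Finset.abs_sum_le_sum_abs _ _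
    _ ≤ ∑ _k : Fin N × Fin d, (|C| * (1 + ‖x‖)) * (2 * ‖h‖) := by
        refine Finset.sum_le_sum fun k _ => ?_
        rw [abs_mul]
        exact mul_le_mul (hD _ _ _) (abs_inc_le k h) (abs_nonneg _) (by positivity)
    _ = _ := by
        rw [Finset.sum_const, nsmul_eq_mul, Finset.card_univ]; ring

end PathSpace

section Taylor

variable {E : Type*} [NormedAddCommGroup E] [NormedSpace ℝ E] [ProperSpace E]

/-- First-order Taylor estimate for a `C¹` function whose derivative has linear growth, with an
error that is small to first order on bounded sets. -/
theorem exists_abs_taylor_remainder_le {f : E → ℝ} (hf : ContDiff ℝ 1 f) {K : ℝ} (hK : 0 ≤ K)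
    (hbound : ∀ x, ‖fderiv ℝ f x‖ ≤ K * (1 + ‖x‖)) {ε : ℝ} (hε : 0 < ε) {M : ℝ} (hM : 0 ≤ M) :
    ∃ C, 0 ≤ C ∧ ∀ x h, |f (x + h) - f x - fderiv ℝ f x h| ≤
      ‖h‖ * (ε + {z : E | M < ‖z‖}.indicator (fun z => 2 * K * (1 + ‖z‖)) x) + C * ‖h‖ ^ 2 := by
  have hmvt : ∀ x h B, (∀ z, ‖z - x‖ ≤ ‖h‖ → ‖fderiv ℝ f z - fderiv ℝ f x‖ ≤ B) →
      |f (x + h) - f x - fderiv ℝ f x h| ≤ B * ‖h‖ := by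
    intro x h B hB
    have := (convex_closedBall x ‖h‖).norm_image_sub_le_of_norm_hasFDerivWithin_le'
      (f := f) (f' := fderiv ℝ f) (φ := fderiv ℝ f x) (C := B) (x := x) (y := x + h)
      (fun z _ => (hf.differentiable one_ne_zero z).hasFDerivAt.hasFDerivWithinAt)
      (fun z hz => hB z (by simpa [dist_eq_norm] using hz))
      (by simp) (by simp)
    simpa using this
  have hglob : ∀ x h, |f (x + h) - f x - fderiv ℝ f x h| ≤
      (2 * K * (1 + ‖x‖) + K * ‖h‖) * ‖h‖ := by
    intro x h
    refine hmvt x h _ fun z hz => ?_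
    have h1 : ‖z‖ ≤ ‖x‖ + ‖h‖ := by
      have := norm_add_le x (z - x)
      simp only [add_sub_cancel] at this
      linarith
    calc ‖fderiv ℝ f z - fderiv ℝ f x‖ ≤ ‖fderiv ℝ f z‖ + ‖fderiv ℝ f x‖ := norm_sub_le _ _
      _ ≤ K * (1 + ‖z‖) + K * (1 + ‖x‖) := add_le_add (hbound z) (hbound x)
      _ ≤ K * (1 + (‖x‖ + ‖h‖)) + K * (1 + ‖x‖) := by gcongr
      _ = _ := by ring
  have huc : UniformContinuousOn (fderiv ℝ f) (Metric.closedBall 0 (M + 1)) :=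
    (isCompact_closedBall _ _).uniformContinuousOn_of_continuous
      (hf.continuous_fderiv one_ne_zero).continuousOn
  obtain ⟨η, hη, hηε⟩ := Metric.uniformContinuousOn_iff_le.1 huc ε hε
  set η' := min η 1 with hη'
  have hη'0 : 0 < η' := lt_min hη one_pos
  refine ⟨2 * K * (1 + M) / η' + K, by positivity, fun x h => ?_⟩
  by_cases hx : M < ‖x‖
  · rw [Set.indicator_of_mem (by exact hx)]
    have : 0 ≤ 2 * K * (1 + M) / η' * ‖h‖ ^ 2 := by positivity
    nlinarith [hglob x h, mul_nonneg hε.le (norm_nonneg h)]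
  rw [Set.indicator_of_notMem (by exact hx), add_zero]
  push Not at hx
  by_cases hh : ‖h‖ ≤ η'
  · have h1 : |f (x + h) - f x - fderiv ℝ f x h| ≤ ε * ‖h‖ := by
      refine hmvt x h ε fun z hz => ?_
      have hzx : ‖z - x‖ ≤ η' := hz.trans hh
      rw [← dist_eq_norm]
      refine hηε z ?_ x ?_ ?_
      · have := norm_add_le x (z - x)
        simp only [add_sub_cancel] at this
        have h2 := hzx.trans (min_le_right _ _)
        simp only [Metric.mem_closedBall, dist_zero_right]
        linarith
      · simp only [Metric.mem_closedBall, dist_zero_right]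
        linarith
      · rw [dist_eq_norm]; exact hzx.trans (min_le_left _ _)
    have h2 : 0 ≤ (2 * K * (1 + M) / η' + K) * ‖h‖ ^ 2 := by positivity
    linarith
  · push Not at hh
    have h1 : ‖h‖ ≤ ‖h‖ ^ 2 / η' := by
      rw [le_div_iff₀ hη'0]; nlinarith [norm_nonneg h]
    calc |f (x + h) - f x - fderiv ℝ f x h| ≤ (2 * K * (1 + ‖x‖) + K * ‖h‖) * ‖h‖ := hglob x h
      _ = 2 * K * (1 + ‖x‖) * ‖h‖ + K * ‖h‖ ^ 2 := by ring
      _ ≤ 2 * K * (1 + M) * (‖h‖ ^ 2 / η') + K * ‖h‖ ^ 2 := by gcongr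
      _ = (2 * K * (1 + M) / η' + K) * ‖h‖ ^ 2 := by ring
      _ ≤ _ := by linarith [mul_nonneg (norm_nonneg h) hε.le]

end Taylor

section Deviation

variable {N d : ℕ} {μ : Measure (PathD N d)} {f : PathD N d → ℝ}

/-- The components `ᵒ𝔻f − ᵖ𝔻f` of the difference of the optional and predictable projections of
the Malliavin derivative. -/
def projDiff (μ : Measure (PathD N d)) (f : PathD N d → ℝ) (k : Fin N × Fin d) (x : PathD N d) :
    ℝ :=
  (μ[Dn f (k.1 + 1) | Fn N d (k.1 + 1)]) x k.2 - (μ[Dn f (k.1 + 1) | Fn N d k.1]) x k.2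

theorem condExp_apply_ae_eq {Ω : Type*} {m mΩ : MeasurableSpace Ω} {π : Measure Ω}
    {φ : Ω → Fin d → ℝ} (hφ : Integrable φ π) (j : Fin d) :
    (fun ω => (π[φ | m]) ω j) =ᵐ[π] π[fun ω => φ ω j | m] :=
  (ContinuousLinearMap.proj (R := ℝ) (φ := fun _ : Fin d => ℝ) j).comp_condExp_comm hφ

theorem sum_integral_lpnorm_sub_eq [IsProbabilityMeasure μ]
    (hg : ∀ k, MemLp (projDiff μ f k) 2 μ) :
    ∑ n ∈ Finset.Icc 1 N,
      ∫ x, lpnorm 2 ((μ[Dn f n | Fn N d n]) x - (μ[Dn f n | Fn N d (n - 1)]) x) ^ (2 : ℝ) ∂μ =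
    ∫ x, ∑ k, projDiff μ f k x ^ 2 ∂μ := by
  rw [sum_Icc_eq_sum_fin, integral_finsetSum _ fun k _ => (hg k).integrable_sq,
    Fintype.sum_prod_type]
  refine Finset.sum_congr rfl fun n _ => ?_
  rw [← integral_finsetSum _ fun j _ => (hg (n, j)).integrable_sq]
  refine integral_congr_ae (ae_of_all _ fun x => ?_)
  simp only [lpnorm_two_rpow_two, Pi.sub_apply, Nat.add_sub_cancel, projDiff]

theorem stronglyMeasurable_condExp_apply {n : ℕ} (φ : PathD N d → Fin d → ℝ) (j : Fin d) :
    StronglyMeasurable[Fn N d n] fun x => (μ[φ | Fn N d n]) x j :=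
  (continuous_apply j).comp_stronglyMeasurable stronglyMeasurable_condExp

theorem stronglyMeasurable_projDiff (k : Fin N × Fin d) :
    StronglyMeasurable[Fn N d (k.1 + 1)] (projDiff μ f k) :=
  (stronglyMeasurable_condExp_apply _ _).sub
    ((stronglyMeasurable_condExp_apply _ _).mono (Fn_mono (Nat.le_succ _)))

theorem memLp_two_id (hmom : Integrable (fun x : PathD N d => ‖x‖ ^ (2 : ℝ)) μ) :
    MemLp (id : PathD N d → PathD N d) 2 μ := by
  refine (memLp_two_iff_integrable_sq_norm measurable_id.aestronglyMeasurable).2 ?_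
  simpa using hmom

theorem memLp_Dn [IsProbabilityMeasure μ]
    (hid : MemLp (id : PathD N d → PathD N d) 2 μ) (hf : ContDiff ℝ 1 f)
    {C : ℝ} (hgrow : ∀ n : ℕ, ∀ x : PathD N d, lpnorm 2 (Dn f n x) ≤ C * (1 + ‖x‖)) (n : ℕ) :
    MemLp (Dn f n) 2 μ := by
  refine memLp_pi_iff.2 fun j => ?_
  refine MemLp.of_le (((memLp_const (1 : ℝ)).add hid.norm).const_mul C)
    (continuous_Dn hf n j).aestronglyMeasurable (ae_of_all _ fun x => ?_)
  rw [Real.norm_eq_abs]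
  exact ((abs_apply_le_lpnorm_two _ j).trans (hgrow n x)).trans (le_abs_self _)

theorem memLp_condExp_apply [IsProbabilityMeasure μ] {φ : PathD N d → Fin d → ℝ}
    (hφ : MemLp φ 2 μ) (m : MeasurableSpace (PathD N d)) (j : Fin d) :
    MemLp (fun x => (μ[φ | m]) x j) 2 μ :=
  memLp_pi_iff.1 (hφ.condExp one_le_two) j

theorem memLp_projDiff [IsProbabilityMeasure μ] (hD : ∀ n, MemLp (Dn f n) 2 μ)
    (k : Fin N × Fin d) : MemLp (projDiff μ f k) 2 μ :=
  (memLp_condExp_apply (hD _) _ _).sub (memLp_condExp_apply (hD _) _ _)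

theorem condExp_projDiff_ae_eq [IsProbabilityMeasure μ] (hD : ∀ n, MemLp (Dn f n) 2 μ)
    (k : Fin N × Fin d) : μ[projDiff μ f k | Fn N d k.1] =ᵐ[μ] 0 := by
  have hi := (hD (k.1 + 1)).integrable one_le_two
  have h1 : projDiff μ f k =ᵐ[μ] μ[fun x => Dn f (k.1 + 1) x k.2 | Fn N d (k.1 + 1)] -
      μ[fun x => Dn f (k.1 + 1) x k.2 | Fn N d k.1] :=
    (condExp_apply_ae_eq hi k.2).sub (condExp_apply_ae_eq hi k.2)
  refine (condExp_congr_ae h1).trans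
    ((condExp_sub integrable_condExp integrable_condExp _).trans ?_)
  refine ((condExp_condExp_of_le (Fn_mono (Nat.le_succ _)) (Fn_le _)).sub
    (condExp_condExp_of_le le_rfl (Fn_le _))).trans ?_
  rw [sub_self]

theorem IsMartingaleMeasure.integrable_coord (hμ : IsMartingaleMeasure μ) (n : ℕ) :
    Integrable (fun x : PathD N d => coord x n) μ := by
  by_cases h : 1 ≤ n ∧ n ≤ N
  · exact (hμ n h.1 h.2).1
  · simp [coord, h]

theorem IsMartingaleMeasure.condExp_inc (hμ : IsMartingaleMeasure μ) [IsProbabilityMeasure μ]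
    (k : Fin N × Fin d) : Integrable (inc k) μ ∧ μ[inc k | Fn N d k.1] =ᵐ[μ] 0 := by
  have h1 := hμ.integrable_coord (k.1 + 1)
  have h0 := hμ.integrable_coord k.1
  have h1' : Integrable (fun x : PathD N d => coord x (k.1 + 1) k.2) μ := h1.eval k.2
  have h0' : Integrable (fun x : PathD N d => coord x k.1 k.2) μ := h0.eval k.2
  refine ⟨h1'.sub h0', (condExp_sub h1' h0' _).trans ?_⟩
  have hm : StronglyMeasurable[Fn N d k.1] (fun x : PathD N d => coord x k.1 k.2) :=
    ((measurable_pi_apply k.2).comp (measurable_coord_Fn le_rfl)).stronglyMeasurable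
  rw [condExp_of_stronglyMeasurable (Fn_le _) hm h0']
  filter_upwards [(hμ (k.1 + 1) (by omega) k.1.2).2,
    condExp_apply_ae_eq (m := Fn N d k.1) h1 k.2] with x hx hx'
  simp only [Nat.add_sub_cancel] at hx
  rw [Pi.sub_apply, ← hx', hx, sub_self, Pi.zero_apply]

end Deviation

section Coupling

variable {N d : ℕ} {μ : Measure (PathD N d)} {f : PathD N d → ℝ}
  {π : Measure (PathD N d × PathD N d)}

theorem memLp_two_snd_sub_fst [IsFiniteMeasure π]
    (hc : Integrable (fun z => cN 2 z.1 z.2) π) :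
    MemLp (fun z : PathD N d × PathD N d => z.2 - z.1) 2 π := by
  have hm : Measurable (fun z : PathD N d × PathD N d => z.2 - z.1) :=
    measurable_snd.sub measurable_fst
  refine (memLp_two_iff_integrable_sq_norm hm.aestronglyMeasurable).2 ?_
  refine Integrable.mono' (hc.const_mul N) (hm.norm.pow_const 2).aestronglyMeasurable
    (ae_of_all _ fun z => ?_)
  rw [Real.norm_eq_abs, abs_of_nonneg (sq_nonneg _)]
  refine (norm_sq_le_sum_inc _).trans (le_of_eq ?_)
  simp only [cN_two, inc_sub]

theorem memLp_inc_comp {Ω : Type*} [MeasurableSpace Ω] {P : Measure Ω} {X : Ω → PathD N d}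
    (hX : MemLp X 2 P) (k : Fin N × Fin d) : MemLp (fun ω => inc k (X ω)) 2 P := by
  refine MemLp.of_le (hX.norm.const_mul 2)
    ((measurable_inc k).comp_aemeasurable hX.1.aemeasurable).aestronglyMeasurable
    (ae_of_all _ fun ω => ?_)
  rw [Real.norm_eq_abs]
  exact (abs_inc_le k _).trans (le_abs_self _)

theorem costD_nonneg : 0 ≤ costD 2 π :=
  integral_nonneg fun z => by
    simp only [cN_two, Pi.zero_apply]; exact Finset.sum_nonneg fun k _ => sq_nonneg _

theorem exists_integral_indicator_sq_le [IsProbabilityMeasure μ]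
    (hid : MemLp (id : PathD N d → PathD N d) 2 μ) (K : ℝ) {ε : ℝ} (hε : 0 < ε) :
    ∃ M : ℝ, 0 ≤ M ∧
      ∫ x, {z : PathD N d | M < ‖z‖}.indicator (fun z => 2 * K * (1 + ‖z‖)) x ^ 2 ∂μ ≤ ε := by
  have hψ : MemLp (fun z : PathD N d => 2 * K * (1 + ‖z‖)) 2 μ :=
    ((memLp_const (1 : ℝ)).add hid.norm).const_mul (2 * K)
  have hlim : Tendsto (fun n : ℕ => ∫ x, {z : PathD N d | (n : ℝ) < ‖z‖}.indicator
      (fun z => 2 * K * (1 + ‖z‖)) x ^ 2 ∂μ) atTop (nhds (∫ _x : PathD N d, (0 : ℝ) ∂μ)) := by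
    refine tendsto_integral_of_dominated_convergence
      (fun z : PathD N d => (2 * K * (1 + ‖z‖)) ^ 2) (fun n => ?_) hψ.integrable_sq
      (fun n => ae_of_all _ fun x => ?_) (ae_of_all _ fun x => ?_)
    · exact (hψ.1.indicator (measurableSet_lt measurable_const measurable_norm)).pow 2
    · by_cases h : (n : ℝ) < ‖x‖
      · rw [Set.indicator_of_mem (by exact h), Real.norm_of_nonneg (sq_nonneg _)]
      · rw [Set.indicator_of_notMem (by exact h)]; simp; positivity
    · refine tendsto_const_nhds.congr' ?_
      obtain ⟨n₀, hn₀⟩ := exists_nat_ge ‖x‖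
      filter_upwards [eventually_ge_atTop n₀] with n hn
      have : ¬ (n : ℝ) < ‖x‖ := not_lt.2 (hn₀.trans (by exact_mod_cast hn))
      rw [Set.indicator_of_notMem (by exact this)]; simp
  rw [integral_zero] at hlim
  obtain ⟨n, hn⟩ := (hlim.eventually (ge_mem_nhds hε)).exists
  exact ⟨n, Nat.cast_nonneg n, hn⟩

/-- The first-order Taylor remainder is small relative to the square root of the cost, uniformly
over couplings with first marginal `μ`. -/
theorem exists_integral_taylor_remainder_le [IsProbabilityMeasure μ]
    (hid : MemLp (id : PathD N d → PathD N d) 2 μ) (hf : ContDiff ℝ 1 f) {C : ℝ}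
    (hgrow : ∀ n : ℕ, ∀ x : PathD N d, lpnorm 2 (Dn f n x) ≤ C * (1 + ‖x‖))
    {ε : ℝ} (hε : 0 < ε) :
    ∃ C', 0 ≤ C' ∧ ∀ π : Measure (PathD N d × PathD N d), IsProbabilityMeasure π →
      π.map Prod.fst = μ → Integrable (fun z => cN 2 z.1 z.2) π →
      Integrable (fun z => f z.2 - f z.1 - fderiv ℝ f z.1 (z.2 - z.1)) π ∧
      |∫ z, (f z.2 - f z.1 - fderiv ℝ f z.1 (z.2 - z.1)) ∂π| ≤
        ε * √(costD 2 π) + C' * costD 2 π := by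
  obtain ⟨K, hK, hbound⟩ := norm_fderiv_le hgrow
  set η : ℝ := ε / (2 * √N + 1) with hη
  have hη0 : 0 < η := by positivity
  obtain ⟨M, hM, hMint⟩ := exists_integral_indicator_sq_le hid K (pow_pos hη0 2)
  obtain ⟨C', hC', hT⟩ := exists_abs_taylor_remainder_le hf hK hbound hη0 hM
  refine ⟨C' * N, by positivity, fun π hπ hfst hc => ?_⟩
  have hH := memLp_two_snd_sub_fst hc
  set ψ : PathD N d → ℝ := {z : PathD N d | M < ‖z‖}.indicator (fun z => 2 * K * (1 + ‖z‖))
    with hψdef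
  have hψμ : MemLp ψ 2 μ :=
    (((memLp_const (1 : ℝ)).add hid.norm).const_mul (2 * K)).indicator
      (measurableSet_lt measurable_const measurable_norm)
  have hψ : MemLp (fun z : PathD N d × PathD N d => ψ z.1) 2 π := by
    rw [← hfst] at hψμ
    exact hψμ.comp_of_map measurable_fst.aemeasurable
  have hψ2 : ∫ z, ψ z.1 ^ 2 ∂π ≤ η ^ 2 := by
    refine le_trans (le_of_eq ?_) hMint
    have h1 : AEStronglyMeasurable (fun x => ψ x ^ 2) (π.map Prod.fst) := by
      rw [hfst]; exact hψμ.1.pow 2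
    have h2 := integral_map (μ := π) measurable_fst.aemeasurable h1
    rw [hfst] at h2
    exact h2.symm
  have hw : MemLp (fun z : PathD N d × PathD N d => η + ψ z.1) 2 π := (memLp_const η).add hψ
  have hcost : ∫ z : PathD N d × PathD N d, ‖z.2 - z.1‖ ^ 2 ∂π ≤ N * costD 2 π := by
    rw [costD, ← integral_const_mul]
    refine integral_mono hH.norm.integrable_sq (hc.const_mul _) fun z => ?_
    refine (norm_sq_le_sum_inc _).trans (le_of_eq ?_)
    simp only [cN_two, inc_sub]
  have hpt : ∀ z : PathD N d × PathD N d,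
      |f z.2 - f z.1 - fderiv ℝ f z.1 (z.2 - z.1)| ≤
        ‖z.2 - z.1‖ * (η + ψ z.1) + C' * ‖z.2 - z.1‖ ^ 2 := fun z => by
    simpa using hT z.1 (z.2 - z.1)
  have hint1 := hH.norm.integrable_mul_two hw
  have hint2 := hH.norm.integrable_sq.const_mul C'
  have hcont : Continuous (fun z : PathD N d × PathD N d =>
      f z.2 - f z.1 - fderiv ℝ f z.1 (z.2 - z.1)) :=
    ((hf.continuous.comp continuous_snd).sub (hf.continuous.comp continuous_fst)).sub
      (((hf.continuous_fderiv one_ne_zero).comp continuous_fst).clm_apply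
        (continuous_snd.sub continuous_fst))
  have hR : Integrable (fun z => f z.2 - f z.1 - fderiv ℝ f z.1 (z.2 - z.1)) π :=
    Integrable.mono' (hint1.add hint2) hcont.aestronglyMeasurable (ae_of_all _ hpt)
  refine ⟨hR, ?_⟩
  have hsq : ∫ z : PathD N d × PathD N d, (η + ψ z.1) ^ 2 ∂π ≤ (2 * η) ^ 2 := by
    calc ∫ z : PathD N d × PathD N d, (η + ψ z.1) ^ 2 ∂π
        ≤ ∫ z, (2 * η ^ 2 + 2 * ψ z.1 ^ 2) ∂π := by
          refine integral_mono hw.integrable_sq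
            ((integrable_const _).add (hψ.integrable_sq.const_mul 2)) fun z => ?_
          simp only
          nlinarith [sq_nonneg (η - ψ z.1)]
      _ = 2 * η ^ 2 + 2 * ∫ z, ψ z.1 ^ 2 ∂π := by
          rw [integral_add (integrable_const _) (hψ.integrable_sq.const_mul 2),
            integral_const, integral_const_mul]
          simp
      _ ≤ _ := by linarith
  have hcs := abs_integral_sum_mul_le (π := π) (ι := Unit) (fun _ => hH.norm) (fun _ => hw)
  simp only [Finset.univ_unique, Finset.sum_singleton] at hcs
  calc |∫ z, (f z.2 - f z.1 - fderiv ℝ f z.1 (z.2 - z.1)) ∂π|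
      ≤ ∫ z, |f z.2 - f z.1 - fderiv ℝ f z.1 (z.2 - z.1)| ∂π := abs_integral_le_integral_abs
    _ ≤ ∫ z : PathD N d × PathD N d,
          (‖z.2 - z.1‖ * (η + ψ z.1) + C' * ‖z.2 - z.1‖ ^ 2) ∂π :=
        integral_mono hR.abs (hint1.add hint2) hpt
    _ = ∫ z : PathD N d × PathD N d, ‖z.2 - z.1‖ * (η + ψ z.1) ∂π +
          C' * ∫ z : PathD N d × PathD N d, ‖z.2 - z.1‖ ^ 2 ∂π := by
        rw [integral_add hint1 hint2, integral_const_mul]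
    _ ≤ √(N * costD 2 π) * (2 * η) + C' * (N * costD 2 π) := by
        refine add_le_add ((le_abs_self _).trans (hcs.trans ?_))
          (mul_le_mul_of_nonneg_left hcost hC')
        refine mul_le_mul (Real.sqrt_le_sqrt hcost) ?_ (Real.sqrt_nonneg _) (Real.sqrt_nonneg _)
        exact Real.sqrt_le_iff.2 ⟨by positivity, hsq⟩
    _ ≤ ε * √(costD 2 π) + C' * N * costD 2 π := by
        rw [Real.sqrt_mul (Nat.cast_nonneg _), mul_assoc C']
        have h1 : √N * (2 * η) ≤ ε := by
          rw [hη, mul_comm, mul_div_assoc', div_mul_eq_mul_div, div_le_iff₀ (by positivity)]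
          nlinarith [Real.sqrt_nonneg N]
        nlinarith [mul_le_mul_of_nonneg_right h1 (Real.sqrt_nonneg (costD 2 π))]

end Coupling

section Linearization

variable {N d : ℕ} {μ : Measure (PathD N d)} {f : PathD N d → ℝ}
  {π : Measure (PathD N d × PathD N d)}

/-- Bicausal couplings of `μ` with a martingale measure, of finite quadratic cost. -/
def IsAdmissible (μ : Measure (PathD N d)) (π : Measure (PathD N d × PathD N d)) : Prop :=
  IsProbabilityMeasure π ∧ IsBicausalCoupling μ (π.map Prod.snd) π ∧
    IsMartingaleMeasure (π.map Prod.snd) ∧ Integrable (fun z => cN 2 z.1 z.2) π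

theorem integral_mul_inc_eq_zero {ν : Measure (PathD N d)} [IsProbabilityMeasure ν]
    (hν : IsMartingaleMeasure ν) {k : Fin N × Fin d} {W : PathD N d → ℝ}
    (hW : StronglyMeasurable[Fn N d k.1] W) (hWi : Integrable (inc k * W) ν) :
    ∫ x, inc k x * W x ∂ν = 0 := by
  rw [← integral_condExp_mul_of_stronglyMeasurable (Fn_le _) hW (hν.condExp_inc k).1 hWi,
    ← integral_zero (PathD N d) ℝ]
  exact integral_congr_ae ((hν.condExp_inc k).2.mono fun x hx => by simp [hx])

theorem MeasureTheory.StronglyMeasurable.comp_comap {Ω E : Type*} {m : MeasurableSpace E} {W : E → ℝ}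
    (hW : StronglyMeasurable[m] W) (X : Ω → E) : StronglyMeasurable[m.comap X] (W ∘ X) :=
  hW.comp_measurable (comap_measurable X)

theorem comap_Fn_mono {Ω : Type*} (X : Ω → PathD N d) {m n : ℕ} (h : m ≤ n) :
    (Fn N d m).comap X ≤ (Fn N d n).comap X :=
  MeasurableSpace.comap_mono (Fn_mono h)

/-- Against admissible couplings, the derivative of `f` acts through `ᵒ𝔻f − ᵖ𝔻f`. -/
theorem IsAdmissible.integral_fderiv_eq [IsProbabilityMeasure μ] (hmart : IsMartingaleMeasure μ)
    (hid : MemLp (id : PathD N d → PathD N d) 2 μ) (hD : ∀ n, MemLp (Dn f n) 2 μ)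
    (hDm : ∀ n j, Measurable fun x => Dn f n x j) (hπ : IsAdmissible μ π) :
    Integrable (fun z => fderiv ℝ f z.1 (z.2 - z.1)) π ∧
    ∫ z, fderiv ℝ f z.1 (z.2 - z.1) ∂π =
      ∫ z, ∑ k, projDiff μ f k z.1 * (inc k z.2 - inc k z.1) ∂π := by
  obtain ⟨hprob, ⟨⟨-, hfst, hcaus⟩, hcaus'⟩, hν, hc⟩ := hπ
  have hνp : IsProbabilityMeasure (π.map Prod.snd) :=
    Measure.isProbabilityMeasure_map measurable_snd.aemeasurable
  have pull : ∀ {W : PathD N d → ℝ}, MemLp W 2 μ → MemLp (fun z => W z.1) 2 π := fun hW => by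
    rw [← hfst] at hW
    exact hW.comp_of_map measurable_fst.aemeasurable
  have hX : MemLp (fun z : PathD N d × PathD N d => z.1) 2 π := by
    rw [← hfst] at hid
    exact hid.comp_of_map measurable_fst.aemeasurable
  have hY : MemLp (fun z : PathD N d × PathD N d => z.2) 2 π := by
    have := hX.add (memLp_two_snd_sub_fst hc)
    refine this.congr_norm measurable_snd.aestronglyMeasurable (ae_of_all _ fun z => ?_)
    simp
  have hle1 : ∀ n, (Fn N d n).comap (Prod.fst : PathD N d × PathD N d → PathD N d) ≤
      (inferInstance : MeasurableSpace (PathD N d × PathD N d)) := fun n =>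
    (MeasurableSpace.comap_mono (Fn_le n)).trans measurable_fst.comap_le
  have hle2 : ∀ n, (Fn N d n).comap (Prod.snd : PathD N d × PathD N d → PathD N d) ≤
      (inferInstance : MeasurableSpace (PathD N d × PathD N d)) := fun n =>
    (MeasurableSpace.comap_mono (Fn_le n)).trans measurable_snd.comap_le
  have hsm : ∀ {W : PathD N d → ℝ}, Measurable W → StronglyMeasurable[Fn N d N] W := fun hW => by
    rw [Fn_self]; exact hW.stronglyMeasurable
  have incX := fun k => memLp_inc_comp hX k
  have incY := fun k => memLp_inc_comp hY k
  have hG : ∀ k : Fin N × Fin d, MemLp (fun x => Dn f (k.1 + 1) x k.2) 2 μ := fun k =>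
    memLp_pi_iff.1 (hD (k.1 + 1)) k.2
  set opt : Fin N × Fin d → PathD N d → ℝ := fun k x =>
    (μ[Dn f (k.1 + 1) | Fn N d (k.1 + 1)]) x k.2 with hopt
  set pred : Fin N × Fin d → PathD N d → ℝ := fun k x =>
    (μ[Dn f (k.1 + 1) | Fn N d k.1]) x k.2 with hpred
  have hoptL : ∀ k, MemLp (opt k) 2 μ := fun k => memLp_condExp_apply (hD _) _ _
  have hpredL : ∀ k, MemLp (pred k) 2 μ := fun k => memLp_condExp_apply (hD _) _ _
  have h1 : ∀ k : Fin N × Fin d,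
      ∫ z, Dn f (k.1 + 1) z.1 k.2 * (inc k z.2 - inc k z.1) ∂π =
      ∫ z, opt k z.1 * (inc k z.2 - inc k z.1) ∂π := by
    intro k
    set φ : PathD N d × PathD N d → ℝ := (fun x => Dn f (k.1 + 1) x k.2) ∘ Prod.fst with hφ
    have hφL : MemLp φ 2 π := pull (hG k)
    have hce : π[φ | (Fn N d (k.1 + 1)).comap Prod.fst] =ᵐ[π] fun z => opt k z.1 := by
      have hi : Integrable (fun x => Dn f (k.1 + 1) x k.2) (π.map Prod.fst) := by
        rw [hfst]; exact (hG k).integrable one_le_two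
      refine (condExp_comp_ae_eq measurable_fst (Fn_le _) hi).trans ?_
      rw [hfst]
      have := (condExp_apply_ae_eq (m := Fn N d (k.1 + 1))
        ((hD (k.1 + 1)).integrable one_le_two) k.2).symm
      rw [← hfst] at this
      have h2 := ae_of_ae_map measurable_fst.aemeasurable this
      rw [hfst] at h2
      exact h2
    have hceL : MemLp (π[φ | (Fn N d (k.1 + 1)).comap Prod.fst]) 2 π := hφL.condExp one_le_two
    have hYk : ∫ z, φ z * inc k z.2 ∂π =
        ∫ z, (π[φ | (Fn N d (k.1 + 1)).comap Prod.fst]) z * inc k z.2 ∂π :=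
      (hcaus (k.1 + 1)).integral_mul_eq (comap_Fn_mono _ k.1.2) (hle2 _) (hle1 _)
        ((hsm (hDm _ _)).comp_comap Prod.fst)
        ((measurable_inc_Fn k).stronglyMeasurable.comp_comap Prod.snd)
        (hφL.integrable one_le_two) (hφL.integrable_mul_two (incY k))
        (hceL.integrable_mul_two (incY k))
    have hXk : ∫ z, (π[φ | (Fn N d (k.1 + 1)).comap Prod.fst]) z * inc k z.1 ∂π =
        ∫ z, φ z * inc k z.1 ∂π :=
      integral_condExp_mul_of_stronglyMeasurable (hle1 _)
        ((measurable_inc_Fn k).stronglyMeasurable.comp_comap Prod.fst)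
        (hφL.integrable one_le_two) (hφL.integrable_mul_two (incX k))
    calc ∫ z, φ z * (inc k z.2 - inc k z.1) ∂π
        = ∫ z, φ z * inc k z.2 ∂π - ∫ z, φ z * inc k z.1 ∂π := by
          rw [← integral_sub (hφL.integrable_mul_two (incY k))
            (hφL.integrable_mul_two (incX k))]
          simp only [mul_sub]
      _ = ∫ z, (π[φ | (Fn N d (k.1 + 1)).comap Prod.fst]) z * (inc k z.2 - inc k z.1) ∂π := by
          rw [hYk, ← hXk, ← integral_sub (hceL.integrable_mul_two (incY k))
            (hceL.integrable_mul_two (incX k))]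
          simp only [mul_sub]
      _ = _ := integral_congr_ae (hce.mono fun z hz => by simp only [hz])
  have h2 : ∀ k : Fin N × Fin d, ∫ z, pred k z.1 * (inc k z.2 - inc k z.1) ∂π = 0 := by
    intro k
    have hpm : StronglyMeasurable[Fn N d k.1] (pred k) := stronglyMeasurable_condExp_apply _ _
    have hXk : ∫ z, pred k z.1 * inc k z.1 ∂π = 0 := by
      have hi := (memLp_inc_comp hid k).integrable_mul_two (hpredL k)
      have h0 := integral_mul_inc_eq_zero hmart hpm hi
      have hi' : AEStronglyMeasurable (fun x => inc k x * pred k x) (π.map Prod.fst) := by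
        rw [hfst]; exact hi.1
      have hm := integral_map (μ := π) measurable_fst.aemeasurable hi'
      rw [hfst, h0] at hm
      rw [hm]
      simp only [mul_comm]
    have hincν := hν.condExp_inc k
    have hce : π[inc k ∘ Prod.snd | (Fn N d k.1).comap Prod.snd] =ᵐ[π] 0 :=
      (condExp_comp_ae_eq measurable_snd (Fn_le _) hincν.1).trans
        (ae_of_ae_map measurable_snd.aemeasurable hincν.2)
    have hYk : ∫ z, inc k z.2 * pred k z.1 ∂π = 0 := by
      refine ((hcaus' k.1).integral_mul_eq (φ := inc k ∘ Prod.snd) (W := pred k ∘ Prod.fst)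
        (comap_Fn_mono _ k.1.2.le) (hle1 _) (hle2 _)
        ((hsm (measurable_inc k)).comp_comap Prod.snd) (hpm.comp_comap Prod.fst)
        ((incY k).integrable one_le_two) ((incY k).integrable_mul_two (pull (hpredL k)))
        (((incY k).condExp one_le_two).integrable_mul_two (pull (hpredL k)))).trans ?_
      rw [← integral_zero (PathD N d × PathD N d) ℝ]
      exact integral_congr_ae (hce.mono fun z hz => by simp [hz])
    simp only [mul_sub]
    rw [integral_sub ((pull (hpredL k)).integrable_mul_two (incY k))
      ((pull (hpredL k)).integrable_mul_two (incX k)), hXk, sub_zero, ← hYk]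
    simp only [mul_comm]
  have hDk : ∀ k, MemLp (fun z : PathD N d × PathD N d => inc k z.2 - inc k z.1) 2 π := fun k =>
    (incY k).sub (incX k)
  have hterm : ∀ k, Integrable
      (fun z : PathD N d × PathD N d => projDiff μ f k z.1 * (inc k z.2 - inc k z.1)) π :=
    fun k => (pull ((hoptL k).sub (hpredL k))).integrable_mul_two (hDk k)
  simp only [fderiv_apply_eq_sum_inc, inc_sub]
  refine ⟨integrable_finsetSum _ fun k _ => (pull (hG k)).integrable_mul_two (hDk k), ?_⟩
  rw [integral_finsetSum _ fun k _ => (pull (hG k)).integrable_mul_two (hDk k),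
    integral_finsetSum _ fun k _ => hterm k]
  refine Finset.sum_congr rfl fun k _ => ?_
  rw [h1 k]
  change _ = ∫ z, (opt k z.1 - pred k z.1) * (inc k z.2 - inc k z.1) ∂π
  simp only [sub_mul]
  rw [integral_sub ((pull (hoptL k)).integrable_mul_two (hDk k))
    ((pull (hpredL k)).integrable_mul_two (hDk k)), h2 k, sub_zero]

theorem integrable_of_linear_growth [IsProbabilityMeasure μ]
    (hid : MemLp (id : PathD N d → PathD N d) 2 μ) (hf : ContDiff ℝ 1 f) {C : ℝ}
    (hgrow : ∀ n : ℕ, ∀ x : PathD N d, lpnorm 2 (Dn f n x) ≤ C * (1 + ‖x‖)) :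
    Integrable f μ := by
  obtain ⟨K, hK, hbound⟩ := norm_fderiv_le hgrow
  obtain ⟨C', -, hT⟩ := exists_abs_taylor_remainder_le hf hK hbound one_pos le_rfl
  have h1 : Integrable (fun x : PathD N d => ‖x‖) μ := hid.norm.integrable one_le_two
  have h2 : Integrable (fun x : PathD N d => ‖x‖ ^ 2) μ := hid.norm.integrable_sq
  have h3 : Integrable (fun x : PathD N d => fderiv ℝ f 0 x) μ :=
    (fderiv ℝ f 0).integrable_comp (hid.integrable one_le_two)
  have h4 : Integrable (fun x => f x - f 0 - fderiv ℝ f 0 x) μ := by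
    refine Integrable.mono' (h1.add (h2.const_mul C'))
      ((hf.continuous.sub continuous_const).sub
        (fderiv ℝ f 0).continuous).aestronglyMeasurable (ae_of_all _ fun x => ?_)
    simpa using hT 0 x
  refine ((h4.add h3).add (integrable_const (f 0))).congr (ae_of_all _ fun x => ?_)
  simp only [Pi.add_apply]
  ring

/-- Uniform first-order expansion of `E_π[f(Y)]` over admissible couplings. -/
theorem exists_abs_integral_sub_le [IsProbabilityMeasure μ] (hmart : IsMartingaleMeasure μ)
    (hid : MemLp (id : PathD N d → PathD N d) 2 μ) (hf : ContDiff ℝ 1 f) {C : ℝ}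
    (hgrow : ∀ n : ℕ, ∀ x : PathD N d, lpnorm 2 (Dn f n x) ≤ C * (1 + ‖x‖))
    {ε : ℝ} (hε : 0 < ε) :
    ∃ C', 0 ≤ C' ∧ ∀ π : Measure (PathD N d × PathD N d), IsAdmissible μ π →
      |∫ z, f z.2 ∂π - ∫ x, f x ∂μ -
        ∫ z, ∑ k, projDiff μ f k z.1 * (inc k z.2 - inc k z.1) ∂π| ≤
        ε * √(costD 2 π) + C' * costD 2 π := by
  obtain ⟨C', hC', hR⟩ := exists_integral_taylor_remainder_le hid hf hgrow hε
  refine ⟨C', hC', fun π hπ => ?_⟩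
  have hfst : π.map Prod.fst = μ := hπ.2.1.1.2.1
  obtain ⟨hRi, hRle⟩ := hR π hπ.1 hfst hπ.2.2.2
  have hfm : Integrable (fun z : PathD N d × PathD N d => f z.1) π := by
    have := integrable_of_linear_growth hid hf hgrow
    rw [← hfst] at this
    exact this.comp_measurable measurable_fst
  obtain ⟨hFi, hFe⟩ := hπ.integral_fderiv_eq hmart hid (memLp_Dn hid hf hgrow)
    fun n j => (continuous_Dn hf n j).measurable
  have hfy : Integrable (fun z : PathD N d × PathD N d => f z.2) π := by
    refine ((hRi.add hFi).add hfm).congr (ae_of_all _ fun z => ?_)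
    simp only [Pi.add_apply]
    ring
  have hfx : ∫ x, f x ∂μ = ∫ z, f z.1 ∂π := by
    rw [← hfst]
    exact integral_map measurable_fst.aemeasurable hf.continuous.aestronglyMeasurable
  have hfyx : Integrable (fun z : PathD N d × PathD N d => f z.2 - f z.1) π := hfy.sub hfm
  rw [hfx, ← hFe, ← integral_sub hfy hfm, ← integral_sub hfyx hFi]
  exact hRle

/-- Uniform first-order upper bound of `E_π[f(Y)]` over admissible couplings. -/
theorem exists_integral_le [IsProbabilityMeasure μ] (hmart : IsMartingaleMeasure μ)
    (hid : MemLp (id : PathD N d → PathD N d) 2 μ) (hf : ContDiff ℝ 1 f) {C : ℝ}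
    (hgrow : ∀ n : ℕ, ∀ x : PathD N d, lpnorm 2 (Dn f n x) ≤ C * (1 + ‖x‖))
    {ε : ℝ} (hε : 0 < ε) :
    ∃ C', 0 ≤ C' ∧ ∀ π : Measure (PathD N d × PathD N d), IsAdmissible μ π →
      ∫ z, f z.2 ∂π ≤ ∫ x, f x ∂μ +
        (√(∫ x, ∑ k, projDiff μ f k x ^ 2 ∂μ) + ε) * √(costD 2 π) + C' * costD 2 π := by
  obtain ⟨C', hC', h⟩ := exists_abs_integral_sub_le hmart hid hf hgrow hε
  refine ⟨C', hC', fun π hπ => ?_⟩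
  have hfst : π.map Prod.fst = μ := hπ.2.1.1.2.1
  have := hπ.1
  have hg : ∀ k, MemLp (projDiff μ f k) 2 (π.map Prod.fst) := fun k => by
    rw [hfst]; exact memLp_projDiff (memLp_Dn hid hf hgrow) k
  have hg' : ∀ k, MemLp (fun z : PathD N d × PathD N d => projDiff μ f k z.1) 2 π := fun k =>
    (hg k).comp_of_map measurable_fst.aemeasurable
  have hDk : ∀ k, MemLp (fun z : PathD N d × PathD N d => inc k z.2 - inc k z.1) 2 π := fun k => by
    simpa only [inc_sub] using memLp_inc_comp (memLp_two_snd_sub_fst hπ.2.2.2) k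
  have hcs := abs_integral_sum_mul_le hg' hDk
  have e1 : ∫ x, ∑ k, projDiff μ f k x ^ 2 ∂μ =
      ∫ z : PathD N d × PathD N d, ∑ k, projDiff μ f k z.1 ^ 2 ∂π := by
    have := integral_map (μ := π) measurable_fst.aemeasurable
      (integrable_finsetSum Finset.univ fun k _ => (hg k).integrable_sq).1
    rwa [hfst] at this
  have e2 : ∫ z : PathD N d × PathD N d, ∑ k, (inc k z.2 - inc k z.1) ^ 2 ∂π = costD 2 π := by
    simp only [costD, cN_two]
  rw [e1]
  rw [e2] at hcs
  linarith [abs_le.1 (h π hπ), abs_le.1 hcs, le_abs_self (∫ z, ∑ k,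
    projDiff μ f k z.1 * (inc k z.2 - inc k z.1) ∂π), (abs_le.1 (h π hπ)).2]

end Linearization

section Perturbation

variable {N d : ℕ} {μ : Measure (PathD N d)} {D : Fin N × Fin d → PathD N d → ℝ}

/-- The path whose increments are those of `x` perturbed by `D`. -/
def pert (D : Fin N × Fin d → PathD N d → ℝ) (x : PathD N d) : PathD N d := fun i j =>
  x i j + ∑ n : Fin N, if (n : ℕ) < i + 1 then D (n, j) x else 0

theorem coord_pert_apply (x : PathD N d) {m : ℕ} (hm : m ≤ N) (j : Fin d) :
    coord (pert D x) m j =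
      coord x m j + ∑ n : Fin N, if (n : ℕ) < m then D (n, j) x else 0 := by
  rcases m with _ | m
  · simp [coord_zero]
  · have h := fun y : PathD N d => coord_succ y ⟨m, hm⟩
    simp only at h
    rw [h, h]
    rfl

theorem inc_pert (k : Fin N × Fin d) (x : PathD N d) :
    inc k (pert D x) = inc k x + D k x := by
  obtain ⟨k, j⟩ := k
  have h : ∑ n : Fin N, (if (n : ℕ) < k + 1 then D (n, j) x else 0) =
      ∑ n : Fin N, (if (n : ℕ) < k then D (n, j) x else 0) + D (k, j) x := by
    have hk : D (k, j) x = ∑ n : Fin N, if n = k then D (n, j) x else 0 := by simp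
    rw [hk, ← Finset.sum_add_distrib]
    refine Finset.sum_congr rfl fun n _ => ?_
    rcases lt_trichotomy (n : ℕ) k with h | h | h
    · have h1 : n ≠ k := fun e => by simp [e] at h
      simp [h, h1, Nat.lt_succ_of_lt h]
    · have h1 : n = k := Fin.ext h
      simp [h1]
    · have h1 : n ≠ k := fun e => by simp [e] at h
      have h2 : ¬ (n : ℕ) < k + 1 := by omega
      simp [h.not_gt, h1, h2]
  simp only [inc, coord_pert_apply x k.2.le, coord_pert_apply x (Nat.succ_le_of_lt k.2), h]
  ring

theorem eq_of_truncPath_eq {F : Type*} {n : ℕ} {X : PathD N d → F} [MeasurableSpace F]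
    [MeasurableSingletonClass F] (hX : Measurable[Fn N d n] X) {x y : PathD N d}
    (h : truncPath n x = truncPath n y) : X x = X y :=
  Measurable.factorsThrough hX h

theorem coord_eq_of_truncPath_eq {n : ℕ} {x y : PathD N d}
    (h : truncPath n x = truncPath n y) : coord x n = coord y n := by
  rw [← coord_truncPath le_rfl x, h, coord_truncPath le_rfl]

theorem truncPath_eq_of_le {m n : ℕ} (hmn : m ≤ n) {x y : PathD N d}
    (h : truncPath n x = truncPath n y) : truncPath m x = truncPath m y := by
  rw [← truncPath_truncPath hmn x, h, truncPath_truncPath hmn]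

theorem measurable_truncPath_pert (hDm : ∀ k, Measurable[Fn N d (k.1 + 1)] (D k)) (n : ℕ) :
    Measurable[Fn N d n] fun x => truncPath n (pert D x) := by
  refine @measurable_pi_lambda _ _ _ (Fn N d n) _ _ fun i => ?_
  by_cases h : (i : ℕ) + 1 ≤ n
  · simp only [truncPath, h, if_true]
    refine @measurable_pi_lambda _ _ _ (Fn N d n) _ _ fun j => ?_
    refine Measurable.add ?_ (Finset.measurable_fun_sum _ fun m _ => ?_)
    · have := (measurable_pi_apply j).comp (measurable_coord_Fn (N := N) (d := d) h)
      simpa only [Function.comp_def, coord_succ] using this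
    · split_ifs with hm
      · exact (hDm (m, j)).mono (Fn_mono (by simp only; omega)) le_rfl
      · exact measurable_const
  · simp only [truncPath, h, if_false]
    exact measurable_const

theorem measurable_pert (hDm : ∀ k, Measurable[Fn N d (k.1 + 1)] (D k)) :
    Measurable (pert D) := by
  have h := measurable_truncPath_pert hDm N
  rw [Fn_self] at h
  convert h using 2 with x
  ext i j
  simp [truncPath, Nat.succ_le_of_lt i.2]

/-- Each step of the perturbed path determines the step of the original path, given the past. -/
def IsStepInjective (D : Fin N × Fin d → PathD N d → ℝ) : Prop :=
  ∀ (n : Fin N) (x y : PathD N d), truncPath n x = truncPath n y →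
    (∀ j, x n j + D (n, j) x = y n j + D (n, j) y) → x n = y n

theorem IsStepInjective.truncPath_eq (hinj : IsStepInjective D) {n : ℕ} {x y : PathD N d}
    (h : truncPath n (pert D x) = truncPath n (pert D y)) : truncPath n x = truncPath n y := by
  induction n with
  | zero => ext i j; simp [truncPath]
  | succ n ih =>
    have hn := ih (truncPath_eq_of_le (Nat.le_succ n) h)
    ext1 i
    by_cases hi : (i : ℕ) < n
    · have := congrFun hn i
      simpa [truncPath, hi, hi.le, Nat.succ_le_of_lt hi] using this
    by_cases hi' : (i : ℕ) = n
    · subst hi'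
      simp only [truncPath, le_refl, if_true]
      refine hinj i x y hn fun j => ?_
      have h1 : inc (i, j) (pert D x) = inc (i, j) (pert D y) :=
        eq_of_truncPath_eq (measurable_inc_Fn (i, j)) h
      rw [inc_pert, inc_pert] at h1
      have h2 := congrFun (coord_eq_of_truncPath_eq hn) j
      simp only [inc, coord_succ] at h1
      linarith
    · have : ¬ (i : ℕ) + 1 ≤ n + 1 := by omega
      simp only [truncPath, this, if_false]

theorem ae_map_pert (hDm : ∀ k, Measurable[Fn N d (k.1 + 1)] (D k)) :
    ∀ᵐ z ∂(μ.map fun x => (x, pert D x)), z.2 = pert D z.1 := by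
  have hT := measurable_pert hDm
  refine (ae_map_iff (measurable_id.prodMk hT).aemeasurable ?_).2 (ae_of_all _ fun x => rfl)
  exact measurableSet_eq_fun measurable_snd (hT.comp measurable_fst)

theorem pert_causal [IsProbabilityMeasure μ] (hDm : ∀ k, Measurable[Fn N d (k.1 + 1)] (D k))
    (n : ℕ) : CondIndepOn (μ.map fun x => (x, pert D x)) ((Fn N d n).comap Prod.fst)
      ((Fn N d n).comap Prod.snd) ((Fn N d N).comap Prod.fst) := by
  have hT := measurable_pert hDm
  have hp : Measurable fun x => (x, pert D x) := measurable_id.prodMk hT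
  have : IsProbabilityMeasure (μ.map fun x => (x, pert D x)) :=
    Measure.isProbabilityMeasure_map hp.aemeasurable
  have hae := ae_map_pert (μ := μ) hDm
  refine condIndepOn_of_forall_ae_eq
    ((MeasurableSpace.comap_mono (Fn_le n)).trans measurable_fst.comap_le)
    ((MeasurableSpace.comap_mono (Fn_le N)).trans measurable_fst.comap_le) ?_
  rintro _ ⟨_, ⟨B, hB, rfl⟩, rfl⟩
  refine ⟨Prod.fst ⁻¹' ((fun x => truncPath n (pert D x)) ⁻¹' B),
    ⟨_, measurable_truncPath_pert hDm n hB, rfl⟩, ?_⟩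
  refine eventuallyEq_set.2 (hae.mono fun z hz => ?_)
  change truncPath n z.2 ∈ B ↔ truncPath n (pert D z.1) ∈ B
  rw [hz]

theorem pert_causal_swap [IsProbabilityMeasure μ]
    (hDm : ∀ k, Measurable[Fn N d (k.1 + 1)] (D k)) (hinj : IsStepInjective D) (n : ℕ) :
    CondIndepOn (μ.map fun x => (x, pert D x)) ((Fn N d n).comap Prod.snd)
      ((Fn N d n).comap Prod.fst) ((Fn N d N).comap Prod.snd) := by
  have hT := measurable_pert hDm
  have hp : Measurable fun x => (x, pert D x) := measurable_id.prodMk hT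
  have : IsProbabilityMeasure (μ.map fun x => (x, pert D x)) :=
    Measure.isProbabilityMeasure_map hp.aemeasurable
  have hae := ae_map_pert (μ := μ) hDm
  refine condIndepOn_of_forall_ae_eq
    ((MeasurableSpace.comap_mono (Fn_le n)).trans measurable_snd.comap_le)
    ((MeasurableSpace.comap_mono (Fn_le N)).trans measurable_snd.comap_le) ?_
  rintro _ ⟨_, ⟨B, hB, rfl⟩, rfl⟩
  set S : PathD N d → PathD N d := fun x => truncPath n (pert D x) with hS
  have hSm : Measurable S := (measurable_truncPath n).comp hT
  have hZ : MeasurableSet {z : PathD N d | truncPath n z = z} :=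
    measurableSet_eq_fun (measurable_truncPath n) measurable_id
  have hSinj : InjOn S (B ∩ {z | truncPath n z = z}) := fun z hz w hw h => by
    have := hinj.truncPath_eq h
    rwa [hz.2, hw.2] at this
  refine ⟨Prod.snd ⁻¹' (truncPath n ⁻¹' (S '' (B ∩ {z | truncPath n z = z}))),
    ⟨_, ⟨_, (hB.inter hZ).image_of_measurable_injOn hSm hSinj, rfl⟩, rfl⟩, ?_⟩
  refine eventuallyEq_set.2 (hae.mono fun z hz => ?_)
  change truncPath n z.1 ∈ B ↔ truncPath n z.2 ∈ S '' (B ∩ {z | truncPath n z = z})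
  rw [hz]
  constructor
  · intro h
    exact ⟨truncPath n z.1, ⟨h, truncPath_truncPath le_rfl _⟩,
      eq_of_truncPath_eq (measurable_truncPath_pert hDm n) (truncPath_truncPath le_rfl _)⟩
  · rintro ⟨w, ⟨hwB, hw⟩, h⟩
    have := hinj.truncPath_eq h
    rwa [← this, hw]

theorem isMartingaleMeasure_map_pert [IsProbabilityMeasure μ] (hμ : IsMartingaleMeasure μ)
    (hDm : ∀ k, Measurable[Fn N d (k.1 + 1)] (D k)) (hDi : ∀ k, Integrable (D k) μ)
    (hD0 : ∀ k, μ[D k | Fn N d k.1] =ᵐ[μ] 0) : IsMartingaleMeasure (μ.map (pert D)) := by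
  have hT := measurable_pert hDm
  have : IsProbabilityMeasure (μ.map (pert D)) :=
    Measure.isProbabilityMeasure_map hT.aemeasurable
  have hint : ∀ m ≤ N, Integrable (fun x : PathD N d => coord x m) (μ.map (pert D)) := by
    intro m hm
    rw [integrable_map_measure (measurable_coord m).aestronglyMeasurable hT.aemeasurable]
    refine Integrable.of_eval fun j => ?_
    simp only [Function.comp_def, coord_pert_apply _ hm]
    refine ((hμ.integrable_coord m).eval j).add (integrable_finsetSum _ fun n _ => ?_)
    split_ifs
    · exact hDi _
    · exact integrable_zero _ _ _
  intro n hn1 hnN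
  obtain ⟨m, rfl⟩ : ∃ m, n = m + 1 := ⟨n - 1, by omega⟩
  have hm := hint m (by omega)
  refine ⟨hint _ hnN, ?_⟩
  simp only [Nat.add_sub_cancel]
  refine (ae_eq_condExp_of_forall_setIntegral_eq (Fn_le m) (hint _ hnN)
    (fun s _ _ => hm.integrableOn) (fun B hB _ => ?_)
    (measurable_coord_Fn le_rfl).aestronglyMeasurable).symm
  ext j
  rw [eval_integral (fun j => hm.integrableOn.eval j),
    eval_integral (fun j => (hint _ hnN).integrableOn.eval j), ← sub_eq_zero, ← neg_eq_zero, neg_sub,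
    ← integral_sub ((hint _ hnN).integrableOn.eval j) (hm.integrableOn.eval j)]
  set k : Fin N × Fin d := (⟨m, hnN⟩, j) with hk
  change ∫ x in B, inc k x ∂(μ.map (pert D)) = 0
  rw [setIntegral_map (Fn_le m B hB) (measurable_inc k).aestronglyMeasurable hT.aemeasurable]
  simp only [inc_pert]
  have hB' : MeasurableSet[Fn N d m] (pert D ⁻¹' B) := by
    obtain ⟨B', hB', rfl⟩ := hB
    exact measurable_truncPath_pert hDm m hB'
  have hinc := hμ.condExp_inc k
  have hsum : μ[inc k + D k | Fn N d m] =ᵐ[μ] 0 :=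
    (condExp_add hinc.1 (hDi k) _).trans ((hinc.2.add (hD0 k)).trans (by simp))
  have := setIntegral_condExp (Fn_le m) (hinc.1.add (hDi k)) hB'
  change ∫ x in pert D ⁻¹' B, (inc k + D k) x ∂μ = 0
  rw [← this, setIntegral_congr_ae (g := fun _ => (0 : ℝ)) (Fn_le m _ hB')
    (hsum.mono fun x hx _ => hx), integral_zero]

theorem costD_map_pert (hDm : ∀ k, Measurable[Fn N d (k.1 + 1)] (D k)) :
    costD 2 (μ.map fun x => (x, pert D x)) = ∫ x, ∑ k, D k x ^ 2 ∂μ := by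
  have hp : Measurable fun x => (x, pert D x) := measurable_id.prodMk (measurable_pert hDm)
  simp only [costD, cN_two]
  rw [integral_map hp.aemeasurable]
  · simp only [inc_pert, add_sub_cancel_left]
  · exact (Finset.measurable_sum _ fun k _ =>
      (((measurable_inc k).comp measurable_snd).sub
        ((measurable_inc k).comp measurable_fst)).pow_const 2).aestronglyMeasurable

theorem integral_map_pert_eq {g : Fin N × Fin d → PathD N d → ℝ} (hg : ∀ k, Measurable (g k))
    (hDm : ∀ k, Measurable[Fn N d (k.1 + 1)] (D k)) :
    ∫ z, ∑ k, g k z.1 * (inc k z.2 - inc k z.1) ∂(μ.map fun x => (x, pert D x)) =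
      ∫ x, ∑ k, g k x * D k x ∂μ := by
  have hp : Measurable fun x => (x, pert D x) := measurable_id.prodMk (measurable_pert hDm)
  rw [integral_map hp.aemeasurable]
  · simp only [inc_pert, add_sub_cancel_left]
  · exact (Finset.measurable_sum _ fun k _ => ((hg k).comp measurable_fst).mul
      (((measurable_inc k).comp measurable_snd).sub
        ((measurable_inc k).comp measurable_fst))).aestronglyMeasurable

theorem isAdmissible_map_pert [IsProbabilityMeasure μ] (hμ : IsMartingaleMeasure μ)
    (hDm : ∀ k, Measurable[Fn N d (k.1 + 1)] (D k)) (hD2 : ∀ k, MemLp (D k) 2 μ)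
    (hD0 : ∀ k, μ[D k | Fn N d k.1] =ᵐ[μ] 0) (hinj : IsStepInjective D) :
    IsAdmissible μ (μ.map fun x => (x, pert D x)) := by
  have hT := measurable_pert hDm
  have hp : Measurable fun x => (x, pert D x) := measurable_id.prodMk hT
  have hfst : (μ.map fun x => (x, pert D x)).map Prod.fst = μ := by
    rw [Measure.map_map measurable_fst hp]
    exact Measure.map_id
  have hsnd : (μ.map fun x => (x, pert D x)).map Prod.snd = μ.map (pert D) := by
    rw [Measure.map_map measurable_snd hp]
    rfl
  refine ⟨Measure.isProbabilityMeasure_map hp.aemeasurable,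
    ⟨⟨rfl, hfst, pert_causal hDm⟩, pert_causal_swap hDm hinj⟩, ?_, ?_⟩
  · rw [hsnd]
    exact isMartingaleMeasure_map_pert hμ hDm (fun k => (hD2 k).integrable one_le_two) hD0
  · simp only [cN_two]
    rw [integrable_map_measure _ hp.aemeasurable]
    · simp only [Function.comp_def, inc_pert, add_sub_cancel_left]
      exact integrable_finsetSum _ fun k _ => (hD2 k).integrable_sq
    · exact (Finset.measurable_sum _ fun k _ =>
        (((measurable_inc k).comp measurable_snd).sub
          ((measurable_inc k).comp measurable_fst)).pow_const 2).aestronglyMeasurable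

end Perturbation

section Quantization

variable {N d : ℕ} {μ : Measure (PathD N d)} {g : Fin N × Fin d → PathD N d → ℝ}

/-- The value `v` rounded to the grid `e ℤ`, its fractional part being replaced by an injective
encoding of `t`. -/
def encode (e v t : ℝ) : ℝ := e * (⌊v / e⌋ + Real.sigmoid t)

theorem abs_encode_sub_le {e : ℝ} (he : 0 < e) (v t : ℝ) : |encode e v t - v| ≤ e := by
  have h : encode e v t - v = e * (Real.sigmoid t - Int.fract (v / e)) := by
    have : v = e * (⌊v / e⌋ + Int.fract (v / e)) := by
      rw [Int.floor_add_fract, mul_div_cancel₀ _ he.ne']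
    rw [encode]
    nth_rewrite 2 [this]
    ring
  rw [h, abs_mul, abs_of_pos he]
  refine mul_le_of_le_one_right he.le (abs_le.2 ⟨?_, ?_⟩) <;>
    linarith [Real.sigmoid_pos t, Real.sigmoid_lt_one t, Int.fract_nonneg (v / e),
      Int.fract_lt_one (v / e)]

theorem eq_of_encode_eq {e : ℝ} (he : 0 < e) {v t w s : ℝ} (h : encode e v t = encode e w s) :
    t = s := by
  have h1 := mul_left_cancel₀ he.ne' h
  have h2 : ∀ r : ℝ, Int.fract (Real.sigmoid r) = Real.sigmoid r := fun r =>
    Int.fract_eq_self.2 ⟨(Real.sigmoid_pos r).le, Real.sigmoid_lt_one r⟩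
  have h3 := congrArg Int.fract h1
  rw [Int.fract_intCast_add, Int.fract_intCast_add, h2, h2] at h3
  exact Real.sigmoid_strictMono.injective h3

theorem measurable_encode (e : ℝ) : Measurable fun z : ℝ × ℝ => encode e z.1 z.2 := by
  unfold encode
  have h : Measurable Real.sigmoid := Real.sigmoid_strictMono.monotone.measurable
  have h1 : Measurable fun z : ℝ × ℝ => ((⌊z.1 / e⌋ : ℤ) : ℝ) :=
    measurable_from_top.comp (Int.measurable_floor.comp (measurable_fst.div_const e))
  exact (h1.add (h.comp measurable_snd)).const_mul e

/-- A martingale difference field `a • g` is uniformly close to one whose perturbation of the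
path is injective at each step. -/
theorem exists_isStepInjective_near [IsProbabilityMeasure μ]
    (hgm : ∀ k, Measurable[Fn N d (k.1 + 1)] (g k)) (hg2 : ∀ k, MemLp (g k) 2 μ)
    (hg0 : ∀ k, μ[g k | Fn N d k.1] =ᵐ[μ] 0) (a : ℝ) {e : ℝ} (he : 0 < e) :
    ∃ D : Fin N × Fin d → PathD N d → ℝ, (∀ k, Measurable[Fn N d (k.1 + 1)] (D k)) ∧
      (∀ k, MemLp (D k) 2 μ) ∧ (∀ k, μ[D k | Fn N d k.1] =ᵐ[μ] 0) ∧ IsStepInjective D ∧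
      ∀ k, ∀ᵐ x ∂μ, |D k x - a * g k x| ≤ 2 * e := by
  set V : Fin N × Fin d → PathD N d → ℝ := fun k x =>
    encode e (x k.1 k.2 + a * g k x) (x k.1 k.2) with hV
  set ρ : Fin N × Fin d → PathD N d → ℝ := fun k x => V k x - x k.1 k.2 with hρ
  have hxm : ∀ k : Fin N × Fin d, Measurable[Fn N d (k.1 + 1)] fun x : PathD N d => x k.1 k.2 := by
    intro k
    have := (measurable_pi_apply k.2).comp
      (measurable_coord_Fn (N := N) (d := d) (le_refl ((k.1 : ℕ) + 1)))
    simpa only [Function.comp_def, coord_succ] using this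
  have hρm : ∀ k, Measurable[Fn N d (k.1 + 1)] (ρ k) := fun k =>
    ((measurable_encode e).comp (((hxm k).add ((hgm k).const_mul a)).prodMk (hxm k))).sub (hxm k)
  have hρle : ∀ k x, |ρ k x - a * g k x| ≤ e := fun k x => by
    have := abs_encode_sub_le he (x k.1 k.2 + a * g k x) (x k.1 k.2)
    rwa [← sub_sub] at this
  have hag : ∀ k, MemLp (fun x => a * g k x) 2 μ := fun k => (hg2 k).const_mul a
  have hρ2 : ∀ k, MemLp (ρ k) 2 μ := fun k => by
    have h1 : MemLp (fun x => ρ k x - a * g k x) 2 μ :=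
      MemLp.of_bound (((hρm k).mono (Fn_le _) le_rfl).aestronglyMeasurable.sub (hag k).1) e
        (ae_of_all _ (hρle k))
    refine (h1.add (hag k)).ae_eq (ae_of_all _ fun x => ?_)
    simp
  have hcm : ∀ k : Fin N × Fin d, Measurable[Fn N d k.1] (μ[ρ k | Fn N d k.1]) := fun k =>
    stronglyMeasurable_condExp.measurable
  refine ⟨fun k x => ρ k x - (μ[ρ k | Fn N d k.1]) x,
    fun k => (hρm k).sub ((hcm k).mono (Fn_mono (Nat.le_succ _)) le_rfl),
    fun k => (hρ2 k).sub ((hρ2 k).condExp one_le_two), fun k => ?_, ?_, fun k => ?_⟩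
  · have hi := (hρ2 k).integrable one_le_two
    refine (condExp_sub hi integrable_condExp _).trans ?_
    rw [condExp_of_stronglyMeasurable (Fn_le _) stronglyMeasurable_condExp integrable_condExp,
      sub_self]
  · intro n x y hxy h
    ext j
    have h1 := eq_of_truncPath_eq (hcm (n, j)) hxy
    have h2 := h j
    simp only [hρ] at h1 h2
    exact eq_of_encode_eq he (by simp only [hV] at h1 h2 ⊢; linarith)
  · have hi := (hρ2 k).integrable one_le_two
    have h1 : μ[ρ k - fun x => a * g k x | Fn N d k.1] =ᵐ[μ] μ[ρ k | Fn N d k.1] := by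
      refine (condExp_sub hi ((hag k).integrable one_le_two) _).trans ?_
      have h2 : μ[fun x => a * g k x | Fn N d k.1] =ᵐ[μ] a • μ[g k | Fn N d k.1] :=
        condExp_smul a (g k) _
      filter_upwards [h2, hg0 k] with x hx hx'
      simp [hx, hx']
    have h3 : ∀ᵐ x ∂μ, ‖(μ[ρ k - fun x => a * g k x | Fn N d k.1]) x‖ ≤ e :=
      ae_bdd_norm_condExp_of_ae_bdd_norm (ae_of_all _ (hρle k))
    filter_upwards [h1, h3] with x hx hx'
    rw [hx, Real.norm_eq_abs] at hx'
    have := abs_le.1 (hρle k x)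
    have := abs_le.1 hx'
    exact abs_le.2 ⟨by linarith, by linarith⟩

theorem isStepInjective_zero : IsStepInjective (0 : Fin N × Fin d → PathD N d → ℝ) :=
  fun n x y _ h => funext fun j => by simpa using h j

theorem integral_sum_add_sq_le [IsProbabilityMeasure μ] {D : Fin N × Fin d → PathD N d → ℝ}
    (hg2 : ∀ k, MemLp (g k) 2 μ) (hD2 : ∀ k, MemLp (D k) 2 μ) {a κ : ℝ} (ha : 0 ≤ a) (hκ : 0 ≤ κ)
    (h : ∀ k, ∀ᵐ x ∂μ, |D k x - a * g k x| ≤ 2 * (κ / (2 * (Fintype.card (Fin N × Fin d) + 1)))) :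
    √(∫ x, ∑ k, D k x ^ 2 ∂μ) ≤ a * √(∫ x, ∑ k, g k x ^ 2 ∂μ) + κ ∧
    a * √(∫ x, ∑ k, g k x ^ 2 ∂μ) ^ 2 - √(∫ x, ∑ k, g k x ^ 2 ∂μ) * κ ≤
      ∫ x, ∑ k, g k x * D k x ∂μ := by
  set M : ℝ := (Fintype.card (Fin N × Fin d) : ℝ) with hM
  have hM0 : 0 ≤ M := Nat.cast_nonneg _
  set A := √(∫ x, ∑ k, g k x ^ 2 ∂μ) with hA
  have hA0 : 0 ≤ A := Real.sqrt_nonneg _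
  set R : Fin N × Fin d → PathD N d → ℝ := fun k x => D k x - a * g k x with hR
  have hR2 : ∀ k, MemLp (R k) 2 μ := fun k => (hD2 k).sub ((hg2 k).const_mul a)
  have hRle : ∫ x, ∑ k, R k x ^ 2 ∂μ ≤ κ ^ 2 := by
    have h1 : ∀ᵐ x ∂μ, ∑ k, R k x ^ 2 ≤ κ ^ 2 := by
      filter_upwards [ae_all_iff.2 h] with x hx
      calc ∑ k, R k x ^ 2 ≤ ∑ _k : Fin N × Fin d, (κ / (M + 1)) ^ 2 := by
            refine Finset.sum_le_sum fun k _ => sq_le_sq' ?_ ?_ <;>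
            · have h2 := abs_le.1 (hx k)
              have h3 : 2 * (κ / (2 * (M + 1))) = κ / (M + 1) := by field_simp
              rw [h3] at h2
              first | exact h2.1 | exact h2.2
        _ = M * (κ / (M + 1)) ^ 2 := by simp [hM]
        _ = κ ^ 2 * (M / (M + 1) ^ 2) := by rw [div_pow]; ring
        _ ≤ κ ^ 2 := by
            refine mul_le_of_le_one_right (sq_nonneg κ) ((div_le_one (by positivity)).2 ?_)
            nlinarith
    refine (integral_mono_ae (integrable_finsetSum _ fun k _ => (hR2 k).integrable_sq)
      (integrable_const _) h1).trans (by simp)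
  have hRκ : √(∫ x, ∑ k, R k x ^ 2 ∂μ) ≤ κ := by
    rw [← Real.sqrt_sq hκ]; exact Real.sqrt_le_sqrt hRle
  have hgR := (abs_integral_sum_mul_le hg2 hR2).trans (mul_le_mul_of_nonneg_left hRκ hA0)
  have hA2 : A ^ 2 = ∫ x, ∑ k, g k x ^ 2 ∂μ := Real.sq_sqrt
    (integral_nonneg fun x => Finset.sum_nonneg fun k _ => sq_nonneg _)
  have igg : Integrable (fun x => ∑ k, g k x ^ 2) μ :=
    integrable_finsetSum _ fun k _ => (hg2 k).integrable_sq
  have igR : Integrable (fun x => ∑ k, g k x * R k x) μ :=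
    integrable_finsetSum _ fun k _ => (hg2 k).integrable_mul_two (hR2 k)
  have iRR : Integrable (fun x => ∑ k, R k x ^ 2) μ :=
    integrable_finsetSum _ fun k _ => (hR2 k).integrable_sq
  have isum : Integrable (fun x => a ^ 2 * ∑ k, g k x ^ 2 + 2 * a * ∑ k, g k x * R k x) μ :=
    (igg.const_mul _).add (igR.const_mul _)
  have e1 : ∫ x, ∑ k, D k x ^ 2 ∂μ =
      a ^ 2 * A ^ 2 + 2 * a * ∫ x, ∑ k, g k x * R k x ∂μ + ∫ x, ∑ k, R k x ^ 2 ∂μ := by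
    rw [hA2, ← integral_const_mul, ← integral_const_mul,
      ← integral_add (igg.const_mul _) (igR.const_mul _),
      ← integral_add isum iRR]
    refine integral_congr_ae (ae_of_all _ fun x => ?_)
    simp only [Finset.mul_sum, ← Finset.sum_add_distrib, hR]
    exact Finset.sum_congr rfl fun k _ => by ring
  have e2 : ∫ x, ∑ k, g k x * D k x ∂μ = a * A ^ 2 + ∫ x, ∑ k, g k x * R k x ∂μ := by
    rw [hA2, ← integral_const_mul, ← integral_add (igg.const_mul _) igR]
    refine integral_congr_ae (ae_of_all _ fun x => ?_)
    simp only [Finset.mul_sum, ← Finset.sum_add_distrib, hR]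
    exact Finset.sum_congr rfl fun k _ => by ring
  have h5 := abs_le.1 hgR
  refine ⟨Real.sqrt_le_iff.2 ⟨by positivity, ?_⟩, by rw [e2]; linarith [h5.1]⟩
  rw [e1]
  nlinarith [mul_le_mul_of_nonneg_left h5.2 ha]

/-- Admissible couplings of cost at most `(δ u)²` almost aligned with a martingale difference. -/
theorem exists_isAdmissible_ge [IsProbabilityMeasure μ] (hμ : IsMartingaleMeasure μ)
    (hgm : ∀ k, Measurable[Fn N d (k.1 + 1)] (g k)) (hg2 : ∀ k, MemLp (g k) 2 μ)
    (hg0 : ∀ k, μ[g k | Fn N d k.1] =ᵐ[μ] 0) {δ u ε : ℝ} (hδ : 0 < δ) (hu : 0 ≤ u) (hε : 0 < ε) :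
    ∃ π, IsAdmissible μ π ∧ √(costD 2 π) ≤ δ * u ∧
      δ * (u * √(∫ x, ∑ k, g k x ^ 2 ∂μ) - ε) ≤
        ∫ z, ∑ k, g k z.1 * (inc k z.2 - inc k z.1) ∂π := by
  set A := √(∫ x, ∑ k, g k x ^ 2 ∂μ) with hA
  have hA0 : 0 ≤ A := Real.sqrt_nonneg _
  have hgm' : ∀ k, Measurable (g k) := fun k => (hgm k).mono (Fn_le _) le_rfl
  rcases (mul_nonneg hu hA0).eq_or_lt with h0 | h0
  · have hm : ∀ k : Fin N × Fin d, Measurable[Fn N d (k.1 + 1)]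
        ((0 : Fin N × Fin d → PathD N d → ℝ) k) := fun k => measurable_const
    refine ⟨_, isAdmissible_map_pert (D := 0) hμ hm (fun k => MemLp.zero)
      (fun k => by simp [condExp_zero]) isStepInjective_zero, ?_, ?_⟩
    · rw [costD_map_pert hm]
      simpa using mul_nonneg hδ.le hu
    · rw [integral_map_pert_eq hgm' hm, ← h0]
      simp only [Pi.zero_apply, mul_zero, Finset.sum_const_zero, integral_zero]
      nlinarith
  have hu' : 0 < u := pos_of_mul_pos_left h0 hA0
  have hA' : 0 < A := pos_of_mul_pos_right h0 hu
  set θ := min u (ε / (2 * A)) with hθ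
  have hθ0 : 0 < θ := lt_min hu' (by positivity)
  have hθu : θ ≤ u := min_le_left _ _
  have hθε : 2 * A * θ ≤ ε := by
    have := mul_le_mul_of_nonneg_left (min_le_right u (ε / (2 * A))) (by positivity : 0 ≤ 2 * A)
    rwa [mul_div_cancel₀ _ (by positivity : 2 * A ≠ 0)] at this
  have ha : 0 ≤ δ * (u - θ) / A := div_nonneg (mul_nonneg hδ.le (sub_nonneg.2 hθu)) hA0
  obtain ⟨D, hDm, hD2, hD0, hinj, hDle⟩ := exists_isStepInjective_near hgm hg2 hg0
    (δ * (u - θ) / A) (e := δ * θ / (2 * (Fintype.card (Fin N × Fin d) + 1))) (by positivity)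
  obtain ⟨h1, h2⟩ := integral_sum_add_sq_le hg2 hD2 ha (by positivity) hDle
  refine ⟨_, isAdmissible_map_pert hμ hDm hD2 hD0 hinj, ?_, ?_⟩
  · rw [costD_map_pert hDm]
    refine h1.trans_eq ?_
    rw [← hA, div_mul_cancel₀ _ hA'.ne']
    ring
  · rw [integral_map_pert_eq hgm' hDm]
    refine le_trans ?_ h2
    rw [← hA]
    have : δ * (u - θ) / A * A ^ 2 = δ * (u - θ) * A := by field_simp
    rw [this]
    nlinarith

end Quantization

section PenalisedSupremum

variable {L : ℝ → ℝ≥0∞}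

theorem EReal.coe_sub_coe_ofReal_mul_top (x : ℝ) {δ : ℝ} (hδ : 0 < δ) :
    (x : EReal) - ((ENNReal.ofReal δ * ⊤ : ℝ≥0∞) : EReal) = ⊥ := by
  rw [ENNReal.mul_top (by simpa using hδ)]
  simp

theorem EReal.coe_sub_coe_ofReal_mul (x : ℝ) {δ : ℝ} (hδ : 0 ≤ δ) {l : ℝ≥0∞} (hl : l ≠ ⊤) :
    (x : EReal) - ((ENNReal.ofReal δ * l : ℝ≥0∞) : EReal) = ((x - δ * l.toReal : ℝ) : EReal) := by
  rw [← EReal.coe_ennreal_toReal (ENNReal.mul_ne_top ENNReal.ofReal_ne_top hl),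
    ENNReal.toReal_mul, ENNReal.toReal_ofReal hδ, EReal.coe_sub]

theorem PenaltyAssumptions.exists_le (hL : PenaltyAssumptions 2 L) (K : ℝ) :
    ∃ U : ℝ, 1 ≤ U ∧ ∀ u, U ≤ u → L u ≠ ⊤ → K * u ^ 2 ≤ (L u).toReal := by
  have h1 : ∀ᶠ u : ℝ in atTop, ENNReal.ofReal K < L u / ENNReal.ofReal (u ^ (2 : ℝ)) :=
    hL.growth.eventually (lt_mem_nhds ENNReal.ofReal_lt_top)
  obtain ⟨U, hU⟩ := eventually_atTop.1 h1
  refine ⟨max U 1, le_max_right _ _, fun u hu hLu => ?_⟩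
  have hu1 : 1 ≤ u := (le_max_right _ _).trans hu
  have h2 := (hU u ((le_max_left _ _).trans hu)).le
  rw [Real.rpow_two] at h2
  have h3 := mul_le_mul_left h2 (ENNReal.ofReal (u ^ 2))
  rw [ENNReal.div_mul_cancel (by simp; nlinarith) ENNReal.ofReal_ne_top,
    ← ENNReal.ofReal_mul' (sq_nonneg u)] at h3
  exact (ENNReal.ofReal_le_iff_le_toReal hLu).1 h3

theorem sub_toReal_le_of_Lconj_eq {A ℓ : ℝ} (hℓ : Lconj L A = (ℓ : EReal))
    {u : ℝ} (hu : 0 ≤ u) (hLu : L u ≠ ⊤) : u * A - (L u).toReal ≤ ℓ := by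
  have h : ((u * A : ℝ) : EReal) - ((L u : ℝ≥0∞) : EReal) ≤ Lconj L A :=
    le_iSup (fun u : {u : ℝ // 0 ≤ u} =>
      ((u.1 * A : ℝ) : EReal) - ((L u.1 : ℝ≥0∞) : EReal)) ⟨u, hu⟩
  rw [hℓ, ← EReal.coe_ennreal_toReal hLu, ← EReal.coe_sub] at h
  exact EReal.coe_le_coe_iff.1 h

theorem PenaltyAssumptions.exists_Lconj_eq (hL : PenaltyAssumptions 2 L) {A : ℝ} (hA : 0 ≤ A) :
    ∃ ℓ : ℝ, 0 ≤ ℓ ∧ Lconj L A = (ℓ : EReal) := by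
  obtain ⟨U, hU1, hU⟩ := hL.exists_le A
  have h0 : 0 ≤ Lconj L A := by
    refine le_trans ?_ (le_iSup (fun u : {u : ℝ // 0 ≤ u} =>
      ((u.1 * A : ℝ) : EReal) - ((L u.1 : ℝ≥0∞) : EReal)) ⟨0, le_rfl⟩)
    simp [hL.zero]
  have h1 : Lconj L A ≤ ((U * A : ℝ) : EReal) := by
    refine iSup_le fun ⟨u, hu⟩ => ?_
    by_cases hLu : L u = ⊤
    · simp [hLu]
    rw [← EReal.coe_ennreal_toReal hLu, ← EReal.coe_sub, EReal.coe_le_coe_iff]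
    have hnn : 0 ≤ (L u).toReal := ENNReal.toReal_nonneg
    rcases le_total u U with h | h
    · nlinarith
    · have := hU u h hLu
      nlinarith [mul_nonneg hA (by nlinarith : 0 ≤ u ^ 2 - u)]
  have ht : Lconj L A ≠ ⊤ := (h1.trans_lt (EReal.coe_lt_top _)).ne
  have hb : Lconj L A ≠ ⊥ := (EReal.bot_lt_zero.trans_le h0).ne'
  refine ⟨(Lconj L A).toReal, EReal.toReal_nonneg h0, (EReal.coe_toReal ht hb).symm⟩

variable {ι : Type*} {E c : ι → ℝ} {A E₀ ℓ : ℝ}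

theorem eventually_iSup_le (hL : PenaltyAssumptions 2 L) (hc : ∀ i, 0 ≤ c i) (hA : 0 ≤ A)
    (hup : ∀ ε > 0, ∃ C, 0 ≤ C ∧ ∀ i, E i ≤ E₀ + (A + ε) * c i + C * c i ^ 2)
    (hℓ0 : 0 ≤ ℓ) (hℓ : Lconj L A = (ℓ : EReal)) {ε : ℝ} (hε : 0 < ε) :
    ∀ᶠ δ in nhdsWithin (0 : ℝ) (Ioi 0),
      (⨆ i, (E i : EReal) - ((ENNReal.ofReal δ * L (c i / δ) : ℝ≥0∞) : EReal)) ≤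
        ((E₀ + δ * (ℓ + ε) : ℝ) : EReal) := by
  obtain ⟨U, hU1, hU⟩ := hL.exists_le (A + 2)
  have hU0 : 0 < U := one_pos.trans_le hU1
  set η := min 1 (ε / (2 * U)) with hη
  have hη0 : 0 < η := lt_min one_pos (by positivity)
  have hη1 : η ≤ 1 := min_le_left _ _
  have hηU : η * U ≤ ε / 2 := by
    have := mul_le_mul_of_nonneg_right (min_le_right 1 (ε / (2 * U))) hU0.le
    have h2 : ε / (2 * U) * U = ε / 2 := by field_simp
    rwa [h2] at this
  obtain ⟨C, hC, hE⟩ := hup η hη0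
  have hlim : Tendsto (fun δ : ℝ => C * δ * U ^ 2) (nhdsWithin 0 (Ioi 0)) (nhds 0) := by
    have : Continuous fun δ : ℝ => C * δ * U ^ 2 := by fun_prop
    simpa using (this.tendsto 0).mono_left nhdsWithin_le_nhds
  filter_upwards [self_mem_nhdsWithin, hlim.eventually (gt_mem_nhds (half_pos hε)),
    hlim.eventually (gt_mem_nhds one_pos)] with δ (hδ : 0 < δ) h1 h2
  refine iSup_le fun i => ?_
  by_cases hLu : L (c i / δ) = ⊤
  · rw [hLu, EReal.coe_sub_coe_ofReal_mul_top _ hδ]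
    exact bot_le
  rw [EReal.coe_sub_coe_ofReal_mul _ hδ.le hLu, EReal.coe_le_coe_iff]
  have hCδ : C * δ ≤ 1 := by nlinarith [mul_nonneg hC hδ.le]
  set u := c i / δ with hu
  have hci : c i = δ * u := by rw [hu, mul_div_cancel₀ _ hδ.ne']
  have hu0 : 0 ≤ u := div_nonneg (hc i) hδ.le
  have hEi := hE i
  rw [hci] at hEi
  have key : (A + η) * u + C * δ * u ^ 2 - (L u).toReal ≤ ℓ + ε := by
    rcases le_total u U with h | h
    · have h3 := sub_toReal_le_of_Lconj_eq hℓ hu0 hLu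
      have h4 : η * u ≤ η * U := mul_le_mul_of_nonneg_left h hη0.le
      have h5 : C * δ * u ^ 2 ≤ C * δ * U ^ 2 :=
        mul_le_mul_of_nonneg_left (pow_le_pow_left₀ hu0 h 2) (mul_nonneg hC hδ.le)
      linarith
    · have h3 := hU u h hLu
      have h4 : u ≤ u ^ 2 := by nlinarith
      have h5 : (A + η) * u ≤ (A + 1) * u ^ 2 :=
        mul_le_mul (by linarith) h4 hu0 (by linarith)
      have h6 : C * δ * u ^ 2 ≤ 1 * u ^ 2 := mul_le_mul_of_nonneg_right hCδ (sq_nonneg u)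
      linarith
  have := mul_le_mul_of_nonneg_left key hδ.le
  nlinarith

theorem eventually_le_iSup (hL : PenaltyAssumptions 2 L) (hc : ∀ i, 0 ≤ c i)
    (hlow : ∀ ε > 0, ∃ C, 0 ≤ C ∧ ∀ δ > 0, ∀ u, 0 ≤ u →
      ∃ i, c i ≤ δ * u ∧ E₀ + δ * (u * A - ε * (1 + u)) - C * (δ * u) ^ 2 ≤ E i)
    (hℓ : Lconj L A = (ℓ : EReal)) {ε : ℝ} (hε : 0 < ε) :
    ∀ᶠ δ in nhdsWithin (0 : ℝ) (Ioi 0),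
      ((E₀ + δ * (ℓ - ε) : ℝ) : EReal) ≤
      ⨆ i, (E i : EReal) - ((ENNReal.ofReal δ * L (c i / δ) : ℝ≥0∞) : EReal) := by
  have h0 : ((ℓ - ε / 2 : ℝ) : EReal) < Lconj L A := by
    rw [hℓ, EReal.coe_lt_coe_iff]; linarith
  obtain ⟨⟨u, hu⟩, h1⟩ := lt_iSup_iff.1 h0
  have hLu : L u ≠ ⊤ := fun h => by simp [h] at h1
  rw [← EReal.coe_ennreal_toReal hLu, ← EReal.coe_sub, EReal.coe_lt_coe_iff] at h1
  obtain ⟨C, hC, hE⟩ := hlow (ε / (4 * (1 + u))) (by positivity)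
  have hlim : Tendsto (fun δ : ℝ => C * δ * u ^ 2) (nhdsWithin 0 (Ioi 0)) (nhds 0) := by
    have : Continuous fun δ : ℝ => C * δ * u ^ 2 := by fun_prop
    simpa using (this.tendsto 0).mono_left nhdsWithin_le_nhds
  filter_upwards [self_mem_nhdsWithin,
    hlim.eventually (gt_mem_nhds (by positivity : 0 < ε / 4))] with δ (hδ : 0 < δ) h2
  obtain ⟨i, hi, hEi⟩ := hE δ hδ u hu
  refine le_iSup_of_le i ?_
  have hle : L (c i / δ) ≤ L u :=
    hL.mono (div_nonneg (hc i) hδ.le) hu ((div_le_iff₀' hδ).2 hi)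
  rw [EReal.coe_sub_coe_ofReal_mul _ hδ.le (ne_top_of_le_ne_top hLu hle), EReal.coe_le_coe_iff]
  have hle' := ENNReal.toReal_mono hLu hle
  have h3 : ε / (4 * (1 + u)) * (1 + u) = ε / 4 := by field_simp
  rw [h3] at hEi
  have key : ℓ - ε ≤ u * A - ε / 4 - C * δ * u ^ 2 - (L (c i / δ)).toReal := by linarith
  have := mul_le_mul_of_nonneg_left key hδ.le
  nlinarith

/-- First-order behaviour of a penalised supremum, from matching expansions of the objective. -/
theorem tendsto_penalised_iSup (hL : PenaltyAssumptions 2 L) (hc : ∀ i, 0 ≤ c i) (hA : 0 ≤ A)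
    (hup : ∀ ε > 0, ∃ C, 0 ≤ C ∧ ∀ i, E i ≤ E₀ + (A + ε) * c i + C * c i ^ 2)
    (hlow : ∀ ε > 0, ∃ C, 0 ≤ C ∧ ∀ δ > 0, ∀ u, 0 ≤ u →
      ∃ i, c i ≤ δ * u ∧ E₀ + δ * (u * A - ε * (1 + u)) - C * (δ * u) ^ 2 ≤ E i) :
    Tendsto (fun δ : ℝ => ((1 / δ : ℝ) : EReal) *
        ((⨆ i, (E i : EReal) - ((ENNReal.ofReal δ * L (c i / δ) : ℝ≥0∞) : EReal)) -
          (E₀ : EReal)))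
      (nhdsWithin 0 (Ioi 0)) (nhds (Lconj L A)) := by
  obtain ⟨ℓ, hℓ0, hℓ⟩ := hL.exists_Lconj_eq hA
  set V : ℝ → EReal := fun δ =>
    ⨆ i, (E i : EReal) - ((ENNReal.ofReal δ * L (c i / δ) : ℝ≥0∞) : EReal) with hV
  have hsq : ∀ ε > 0, ∀ᶠ δ in nhdsWithin (0 : ℝ) (Ioi 0),
      V δ = ((V δ).toReal : EReal) ∧ |1 / δ * ((V δ).toReal - E₀) - ℓ| ≤ ε := by
    intro ε hε
    filter_upwards [self_mem_nhdsWithin, eventually_iSup_le hL hc hA hup hℓ0 hℓ hε,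
      eventually_le_iSup hL hc hlow hℓ hε] with δ (hδ : 0 < δ) h1 h2
    have hVe : V δ = ((V δ).toReal : EReal) :=
      (EReal.coe_toReal (h1.trans_lt (EReal.coe_lt_top _)).ne
        ((EReal.bot_lt_coe _).trans_le h2).ne').symm
    change V δ ≤ _ at h1
    change _ ≤ V δ at h2
    rw [hVe, EReal.coe_le_coe_iff] at h1 h2
    refine ⟨hVe, ?_⟩
    have h3 : 1 / δ * ((V δ).toReal - E₀) - ℓ = ((V δ).toReal - E₀ - δ * ℓ) / δ := by
      field_simp
    rw [h3, abs_div, abs_of_pos hδ, div_le_iff₀ hδ]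
    exact abs_le.2 ⟨by linarith, by linarith⟩
  have hreal : Tendsto (fun δ : ℝ => 1 / δ * ((V δ).toReal - E₀)) (nhdsWithin 0 (Ioi 0))
      (nhds ℓ) := by
    refine Metric.tendsto_nhds.2 fun ε hε => ?_
    filter_upwards [hsq (ε / 2) (half_pos hε)] with δ h
    rw [Real.dist_eq]
    exact h.2.trans_lt (half_lt_self hε)
  rw [hℓ]
  refine ((continuous_coe_real_ereal.tendsto ℓ).comp hreal).congr' ?_
  filter_upwards [hsq 1 one_pos] with δ h
  change _ = ((1 / δ : ℝ) : EReal) * (V δ - E₀)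
  rw [h.1, ← EReal.coe_sub, ← EReal.coe_mul]
  simp

end PenalisedSupremum

/-- Discrete-time sensitivity under the martingale constraint for `p = 2`:
`lim_{δ→0+} (V_Mart(δ) − V_Mart(0))/δ
  = L*((Σ_{n=1}^N E_μ[|E_μ[𝔻_n f(X)|F_n] − E_μ[𝔻_n f(X)|F_{n−1}]|²])^{1/2})`,
i.e. the sensitivity equals `L*(‖ᵒ𝔻f − ᵖ𝔻f‖_{L²(μ)})`. -/
theorem statement_12 {N d : ℕ}
    (L : ℝ → ℝ≥0∞) (hL : PenaltyAssumptions 2 L)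
    (μ : Measure (PathD N d)) [IsProbabilityMeasure μ]
    (hmart : IsMartingaleMeasure μ)
    (hmom : Integrable (fun x : PathD N d => ‖x‖ ^ (2 : ℝ)) μ)
    (f : PathD N d → ℝ) (hf : ContDiff ℝ 1 f)
    (C : ℝ) (hgrow : ∀ n : ℕ, ∀ x : PathD N d,
      lpnorm 2 (Dn f n x) ≤ C * (1 + ‖x‖)) :
    Tendsto (fun δ : ℝ =>
        (((1 / δ : ℝ)) : EReal) * (VMartD 2 L μ f δ - ((∫ x, f x ∂μ : ℝ) : EReal)))
      (nhdsWithin 0 (Set.Ioi 0))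
      (nhds (Lconj L
        ((∑ n ∈ Finset.Icc 1 N,
          ∫ x, lpnorm 2 ((μ[Dn f n | Fn N d n]) x - (μ[Dn f n | Fn N d (n - 1)]) x)
            ^ (2 : ℝ) ∂μ) ^ (1 / 2 : ℝ)))) := by
  have hid := memLp_two_id hmom
  have hD := memLp_Dn hid hf hgrow
  have hg := memLp_projDiff hD
  rw [sum_integral_lpnorm_sub_eq hg, ← Real.sqrt_eq_rpow]
  simp only [VMartD, ← Real.sqrt_eq_rpow]
  refine tendsto_penalised_iSup hL (fun π => Real.sqrt_nonneg _) (Real.sqrt_nonneg _) ?_ ?_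
  · intro ε hε
    obtain ⟨C', hC', h⟩ := exists_integral_le hmart hid hf hgrow hε
    refine ⟨C', hC', fun π => ?_⟩
    rw [Real.sq_sqrt costD_nonneg]
    exact h π.1 π.2
  · intro ε hε
    obtain ⟨C', hC', h⟩ := exists_abs_integral_sub_le hmart hid hf hgrow hε
    refine ⟨C', hC', fun δ hδ u hu => ?_⟩
    obtain ⟨π, hπ, hcost, hpair⟩ := exists_isAdmissible_ge hmart
      (fun k => (stronglyMeasurable_projDiff k).measurable) hg (condExp_projDiff_ae_eq hD)
      hδ hu hε
    refine ⟨⟨π, hπ⟩, hcost, ?_⟩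
    have h1 := (abs_le.1 (h π hπ)).1
    have h2 : costD 2 π ≤ (δ * u) ^ 2 := by
      rw [← Real.sq_sqrt (costD_nonneg (π := π))]
      exact pow_le_pow_left₀ (Real.sqrt_nonneg _) hcost 2
    have h3 := mul_le_mul_of_nonneg_left h2 hC'
    have h4 := mul_le_mul_of_nonneg_left hcost hε.le
    linarith

end
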